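/- Let (j_{0,k})_{k ≥ 1} denote the strictly increasing enumeration of the positive zeros of J_0, let (ω_k)_{k ≥ 1} be the strictly increasing enumeration of the set {j_{0,n}^2 − j_{0,p}^2 : p ∈ {1, 2, 3}, n ≥ p + 1}, and set ω_0 := 0. Then for every T > 0 there exists a continuous ℝ-linear map M : ℝ × ℓ²_r(ℕ, ℂ) → L^2((0,T); ℝ) such that for every d̃ ∈ ℝ and every d = (d_n)_{n ∈ ℕ} ∈ ℓ²_r(ℕ, ℂ), the function w := M(d̃, d) satisfies ∫_0^T w(t) e^{i ω_n t} dt = d_n for every n ∈ ℕ and ∫_0^T t w(t) dt = d̃. -/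

import Mathlib

open MeasureTheory Complex

/-- Bessel function of the first kind of integer order `ν`, defined by its
everywhere-convergent power series. -/
noncomputable def besselJ (ν : ℕ) (x : ℝ) : ℝ :=
  ∑' m : ℕ, ((-1 : ℝ) ^ m / ((Nat.factorial m : ℝ) * (Nat.factorial (m + ν) : ℝ)))
    * (x / 2) ^ (2 * m + ν)

/-- `ℓ²_r(ℕ, ℂ)`: the real subspace of `ℓ²(ℕ, ℂ)` consisting of those sequences whose
zeroth entry is real. -/
noncomputable def l2r : Submodule ℝ (lp (fun _ : ℕ => ℂ) 2) where
  carrier := {d | (d 0).im = 0}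
  add_mem' := by
    intro a b ha hb
    simp only [Set.mem_setOf_eq, lp.coeFn_add, Pi.add_apply, Complex.add_im] at *
    rw [ha, hb]; ring
  zero_mem' := by
    simp only [Set.mem_setOf_eq, lp.coeFn_zero, Pi.zero_apply, Complex.zero_im]
  smul_mem' := by
    intro c d hd
    simp only [Set.mem_setOf_eq, lp.coeFn_smul, Pi.smul_apply, Complex.smul_im] at *
    rw [hd]; simp


lemma tail_deriv (c : ℕ → ℝ) (hc : ∀ m, |c m| ≤ 1 / (m.factorial : ℝ)) (z : ℝ) :
    HasDerivAt (fun z : ℝ => ∑' m, c m * z ^ m) (∑' m : ℕ, ((m : ℝ) + 1) * c (m + 1) * z ^ m) z := by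
  set R : ℝ := |z| + 1 with hR
  have hR1 : 1 ≤ R := by have := abs_nonneg z; linarith
  have hb : ∀ m : ℕ, ∀ y ∈ Metric.ball (0 : ℝ) R, ‖c m * (m * y ^ (m - 1))‖ ≤ (2 * R) ^ m / (m.factorial : ℝ) := by
    intro m y hy
    have hy' : |y| ≤ R := by
      have := mem_ball_zero_iff.1 hy
      rw [Real.norm_eq_abs] at this; exact this.le
    rw [norm_mul, norm_mul, norm_pow, Real.norm_eq_abs, Real.norm_eq_abs, Real.norm_eq_abs, Nat.abs_cast]
    have h1 : |y| ^ (m - 1) ≤ R ^ m :=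
      (pow_le_pow_left₀ (abs_nonneg _) hy' _).trans (pow_le_pow_right₀ hR1 (Nat.sub_le _ _))
    have h2 : (m : ℝ) ≤ 2 ^ m := by exact_mod_cast (Nat.lt_two_pow_self (n := m)).le
    calc |c m| * (m * |y| ^ (m - 1)) ≤ (1 / (m.factorial : ℝ)) * (2 ^ m * R ^ m) := by
          gcongr
          exact hc m
      _ = _ := by rw [mul_pow]; ring
  have hz : z ∈ Metric.ball (0 : ℝ) R := by
    rw [mem_ball_zero_iff, Real.norm_eq_abs]; linarith
  have hs0 : Summable fun m => c m * z ^ m := by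
    refine Summable.of_norm_bounded (g := fun m : ℕ => |z| ^ m / (m.factorial : ℝ)) (Real.summable_pow_div_factorial _) ?_
    intro m
    rw [norm_mul, norm_pow, Real.norm_eq_abs, Real.norm_eq_abs]
    calc |c m| * |z| ^ m ≤ (1 / (m.factorial : ℝ)) * |z| ^ m := by gcongr; exact hc m
      _ = _ := by ring
  have key := hasDerivAt_tsum_of_isPreconnected (g := fun m z => c m * z ^ m)
    (g' := fun m z => c m * (m * z ^ (m - 1))) (Real.summable_pow_div_factorial (2 * R))
    Metric.isOpen_ball (convex_ball (0 : ℝ) R).isPreconnected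
    (fun m y _ => (hasDerivAt_pow m y).const_mul (c m)) hb hz hs0 hz
  have hs1 : Summable fun m : ℕ => c m * (m * z ^ (m - 1)) :=
    Summable.of_norm_bounded (Real.summable_pow_div_factorial (2 * R)) (fun m => hb m z hz)
  rw [hs1.tsum_eq_zero_add] at key
  refine key.congr_deriv ?_
  simp only [Nat.cast_zero, zero_mul, mul_zero, zero_add]
  congr 1; ext m; push_cast; ring

noncomputable def FF (z : ℝ) : ℝ := ∑' m : ℕ, ((-1 : ℝ) ^ m / ((m.factorial : ℝ) * m.factorial)) * z ^ m
noncomputable def AA (z : ℝ) : ℝ := ∑' m : ℕ, ((-1 : ℝ) ^ m / ((m.factorial : ℝ) * (m+1).factorial)) * z ^ m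

lemma FF_deriv (z : ℝ) : HasDerivAt FF (- AA z) z := by
  have := tail_deriv (fun m => (-1 : ℝ) ^ m / ((m.factorial : ℝ) * m.factorial)) (by
    intro m
    rw [abs_div, abs_pow, abs_neg, abs_one, one_pow, abs_mul, Nat.abs_cast]
    have : (1 : ℝ) ≤ m.factorial := by exact_mod_cast Nat.succ_le_of_lt m.factorial_pos
    gcongr
    nlinarith) z
  refine HasDerivAt.congr_deriv (f := FF) this ?_
  unfold AA
  rw [← tsum_neg]
  congr 1; ext m
  have : (m.factorial : ℝ) ≠ 0 := by positivity
  have : (m : ℝ) + 1 ≠ 0 := by positivity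
  rw [Nat.factorial_succ]; push_cast; field_simp; ring

lemma AA_deriv (z : ℝ) : HasDerivAt (fun z => z * AA z) (FF z) z := by
  have := tail_deriv (fun m => match m with | 0 => 0 | (m+1) => (-1 : ℝ) ^ m / ((m.factorial : ℝ) * (m+1).factorial)) (by
    intro m
    cases m with
    | zero => simp
    | succ m =>
      simp only
      rw [abs_div, abs_pow, abs_neg, abs_one, one_pow, abs_mul, Nat.abs_cast, Nat.abs_cast]
      have : (1 : ℝ) ≤ m.factorial := by exact_mod_cast Nat.succ_le_of_lt m.factorial_pos
      have : (1 : ℝ) ≤ (m+1).factorial := by exact_mod_cast Nat.succ_le_of_lt (m+1).factorial_pos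
      gcongr
      nlinarith) z
  convert this using 1
  · ext z
    rw [tsum_eq_zero_add']
    · simp only [zero_mul, zero_add]
      rw [AA, ← tsum_mul_left]
      congr 1; ext m; ring
    · refine Summable.of_norm_bounded (g := fun m : ℕ => |z| * (|z| ^ m / (m.factorial : ℝ))) ((Real.summable_pow_div_factorial _).mul_left _) ?_
      intro m
      simp only
      rw [norm_mul, norm_pow, norm_div, norm_pow, norm_neg, norm_one, one_pow, norm_mul, Real.norm_natCast, Real.norm_natCast, Real.norm_eq_abs, pow_succ]
      have : (1 : ℝ) ≤ m.factorial := by exact_mod_cast Nat.succ_le_of_lt m.factorial_pos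
      have : (1 : ℝ) ≤ (m+1).factorial := by exact_mod_cast Nat.succ_le_of_lt (m+1).factorial_pos
      calc 1 / ((m.factorial : ℝ) * (m+1).factorial) * (|z|^m * |z|) ≤ 1 / (m.factorial : ℝ) * (|z|^m * |z|) := by
            gcongr; nlinarith
        _ = _ := by ring
  · rw [FF]
    congr 1; ext m
    have : (m.factorial : ℝ) ≠ 0 := by positivity
    have : (m : ℝ) + 1 ≠ 0 := by positivity
    simp only [Nat.factorial_succ]; push_cast; field_simp

lemma bessel_FF (x : ℝ) : besselJ 0 x = FF ((x/2)^2) := by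
  simp only [besselJ, FF, add_zero]
  congr 1; ext m; rw [pow_mul]

lemma FF_gap (a b : ℝ) (ha : 0 < a) (hab : a < b) (hFa : FF a = 0) (hFb : FF b = 0)
    (m : ℝ) (hm : m ∈ Set.Icc a b) (hFm : FF m ≠ 0) : a ≤ (b - a) ^ 2 := by
  have hcF : Continuous FF := continuous_iff_continuousAt.2 fun z => (FF_deriv z).continuousAt
  obtain ⟨c, hc, hc0⟩ := exists_hasDerivAt_eq_zero (f := FF) (f' := fun z => - AA z) hab hcF.continuousOn (by rw [hFa, hFb]) (fun x _ => FF_deriv x)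
  obtain ⟨p, hp, hmax⟩ := isCompact_Icc.exists_isMaxOn (Set.nonempty_Icc.2 hab.le) hcF.abs.continuousOn
  set M := |FF p| with hM
  have hMb : ∀ x ∈ Set.Icc a b, |FF x| ≤ M := fun x hx => hmax hx
  have hMpos : 0 < M := lt_of_lt_of_le (abs_pos.2 hFm) (hMb m hm)
  have hAc : c * AA c = 0 := by have : AA c = 0 := by linarith
                                rw [this, mul_zero]
  have hcI : c ∈ Set.Icc a b := Set.Ioo_subset_Icc_self hc
  have hA : ∀ x ∈ Set.Icc a b, |AA x| ≤ M * (b - a) / a := by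
    intro x hx
    have h := (convex_Icc a b).norm_image_sub_le_of_norm_hasDerivWithin_le (f := fun z => z * AA z) (f' := FF) (C := M)
      (fun y _ => (AA_deriv y).hasDerivWithinAt) (fun y hy => hMb y hy) hcI hx
    simp only [hAc, sub_zero, Real.norm_eq_abs, abs_mul] at h
    have h1 : |x - c| ≤ b - a := by
      rw [abs_le]; constructor <;> linarith [hx.1, hx.2, hcI.1, hcI.2]
    have h2 : a ≤ |x| := hx.1.trans (le_abs_self x)
    rw [le_div_iff₀ ha]
    calc |AA x| * a ≤ |x| * |AA x| := by rw [mul_comm]; gcongr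
      _ ≤ _ := h.trans (by gcongr)
  have h := (convex_Icc a b).norm_image_sub_le_of_norm_hasDerivWithin_le (f := FF) (f' := fun z => - AA z) (C := M * (b - a) / a)
      (fun y _ => (FF_deriv y).hasDerivWithinAt) (fun y hy => by simpa using hA y hy) (Set.left_mem_Icc.2 hab.le) hp
  simp only [hFa, sub_zero, Real.norm_eq_abs] at h
  have h1 : |p - a| ≤ b - a := by
      rw [abs_le]; constructor <;> linarith [hp.1, hp.2]
  have h3 : M ≤ M * (b - a) / a * (b - a) := h.trans (by
    have : 0 ≤ M * (b - a) / a := by have := sub_pos.2 hab; positivity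
    gcongr)
  have h4 : M * a ≤ M * (b-a)^2 := by
    have := mul_le_mul_of_nonneg_right h3 ha.le
    calc _ ≤ _ := this
      _ = _ := by field_simp
  exact le_of_mul_le_mul_left h4 hMpos

lemma lam_gap (j : ℕ → ℝ)
    (hj_pos : ∀ k, 1 ≤ k → 0 < j k)
    (hj_mono : ∀ k l, 1 ≤ k → k < l → j k < j l)
    (hj_zero : ∀ k, 1 ≤ k → besselJ 0 (j k) = 0)
    (hj_surj : ∀ x : ℝ, 0 < x → besselJ 0 x = 0 → ∃ k, 1 ≤ k ∧ j k = x) (k : ℕ) (hk : 1 ≤ k) :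
    2 * j k ≤ j (k+1) ^ 2 - j k ^ 2 := by
  have hlt := hj_mono k (k+1) hk (by omega)
  have h0 := hj_pos k hk
  have h0' := hj_pos (k+1) (by omega)
  set x := (j k + j (k+1)) / 2 with hx
  have hx0 : besselJ 0 x ≠ 0 := by
    intro h
    obtain ⟨l, hl, hlx⟩ := hj_surj x (by linarith) h
    have h1 : k < l := by
      by_contra hh
      rcases (not_lt.1 hh).lt_or_eq with h2 | h2
      · have := hj_mono l k hl h2; linarith
      · rw [h2] at hlx; linarith
    have h2 : l < k + 1 := by
      by_contra hh
      rcases (not_lt.1 hh).lt_or_eq with h2 | h2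
      · have := hj_mono (k+1) l (by omega) h2; linarith
      · rw [← h2] at hlx; linarith
    omega
  have := FF_gap ((j k / 2)^2) ((j (k+1)/2)^2) (by positivity) (by gcongr) (by rw [← bessel_FF]; exact hj_zero k hk)
    (by rw [← bessel_FF]; exact hj_zero (k+1) (by omega)) ((x/2)^2) ⟨by gcongr; linarith, by gcongr; linarith⟩ (by rwa [← bessel_FF])
  have h3 := abs_le_of_sq_le_sq' this (by
    have : (j k / 2)^2 ≤ (j (k+1)/2)^2 := by gcongr
    linarith)
  nlinarith [h3.2]

lemma lam_gap_tendsto (j : ℕ → ℝ)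
    (hj_pos : ∀ k, 1 ≤ k → 0 < j k)
    (hj_mono : ∀ k l, 1 ≤ k → k < l → j k < j l)
    (hj_zero : ∀ k, 1 ≤ k → besselJ 0 (j k) = 0)
    (hj_surj : ∀ x : ℝ, 0 < x → besselJ 0 x = 0 → ∃ k, 1 ≤ k ∧ j k = x) (G : ℝ) :
    ∃ N, 1 ≤ N ∧ ∀ m, N ≤ m → G ≤ j m ^ 2 ∧ ∀ n, m < n → G ≤ j n ^ 2 - j m ^ 2 := by
  have hg := lam_gap j hj_pos hj_mono hj_zero hj_surj
  have h1 := hj_pos 1 le_rfl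
  have hmono1 : ∀ k, 1 ≤ k → j 1 ≤ j k := by
    intro k hk
    rcases hk.lt_or_eq with h | h
    · exact (hj_mono 1 k le_rfl h).le
    · rw [h]
  have hlin : ∀ k : ℕ, 2 * j 1 * k ≤ j (k+1) ^ 2 := by
    intro k
    induction k with
    | zero => simp; positivity
    | succ k ih =>
      have := hg (k+1) (by omega)
      have := hmono1 (k+1) (by omega)
      push_cast; linarith
  obtain ⟨K, hK⟩ := exists_nat_gt ((G ^ 2 + |G|) / (2 * j 1))
  have hKK : G ^ 2 + |G| ≤ 2 * j 1 * K := by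
    rw [div_lt_iff₀ (by positivity)] at hK; linarith
  refine ⟨K + 1, by omega, fun m hm => ?_⟩
  have hmp := hj_pos m (by omega)
  have hsq : G^2 + |G| ≤ j m ^ 2 := by
    obtain ⟨l, rfl⟩ : ∃ l, m = l + 1 := ⟨m - 1, by omega⟩
    have : (K : ℝ) ≤ l := by exact_mod_cast (by omega : K ≤ l)
    calc _ ≤ 2 * j 1 * K := hKK
      _ ≤ 2 * j 1 * l := by gcongr
      _ ≤ _ := hlin l
  have hGj : G ≤ j m := by
    have := abs_nonneg G
    exact (abs_le_of_sq_le_sq' (by linarith : G^2 ≤ j m ^2) hmp.le).2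
  refine ⟨by have := le_abs_self G; nlinarith, fun n hn => ?_⟩
  have h2 := hg m (by omega)
  have h3 : j (m+1) ≤ j n := by
    rcases (Nat.succ_le_of_lt hn).lt_or_eq with h | h
    · exact (hj_mono (m+1) n (by omega) h).le
    · exact (congrArg j h).le
  have h4 : j (m+1)^2 ≤ j n ^2 := by
    have := hj_pos (m+1) (by omega)
    gcongr
  linarith

noncomputable def KK (T x : ℝ) : ℂ := ∫ t in (0:ℝ)..T, ((t * (T - t) : ℝ) : ℂ) * Complex.exp (I * x * t)

lemma KK_bound (T x : ℝ) (hT : 0 < T) (hx : 1 ≤ |x|) : ‖KK T x‖ ≤ (2 * T + 4) / x ^ 2 := by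
  have hx0 : x ≠ 0 := by intro h; rw [h] at hx; norm_num at hx
  have hxc : (x : ℂ) ≠ 0 := by exact_mod_cast hx0
  set z : ℂ := I * x with hz
  have hz0 : z ≠ 0 := mul_ne_zero I_ne_zero hxc
  have hder : ∀ t : ℝ, HasDerivAt (fun t : ℝ => Complex.exp (z * t) * ((t * (T - t)) / z - (T - 2 * t) / z ^ 2 - 2 / z ^ 3))
      (((t * (T - t) : ℝ) : ℂ) * Complex.exp (z * t)) t := by
    intro t
    have h : HasDerivAt (fun t : ℂ => Complex.exp (z * t) * ((t * (T - t)) / z - (T - 2 * t) / z ^ 2 - 2 / z ^ 3))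
        (((t * (T - t) : ℝ) : ℂ) * Complex.exp (z * t)) (t : ℂ) := by
      have h1 : HasDerivAt (fun t : ℂ => z * t) z (t : ℂ) := by
        simpa using (hasDerivAt_id (t : ℂ)).const_mul z
      have h2 : HasDerivAt (fun t : ℂ => t * (T - t)) (1 * (T - t) + t * (-1) : ℂ) (t : ℂ) :=
        (hasDerivAt_id (t : ℂ)).mul ((hasDerivAt_id (t : ℂ)).const_sub (T : ℂ))
      have h3 : HasDerivAt (fun t : ℂ => (T : ℂ) - 2 * t) (-(2 * 1) : ℂ) (t : ℂ) :=
        ((hasDerivAt_id (t : ℂ)).const_mul 2).const_sub (T : ℂ)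
      have := h1.cexp.mul (((h2.div_const z).sub (h3.div_const (z ^ 2))).sub_const (2 / z ^ 3))
      refine this.congr_deriv ?_
      simp only [Pi.sub_apply]
      push_cast
      field_simp
      ring
    exact h.comp_ofReal
  have hint : KK T x = Complex.exp (z * T) * (T / z ^ 2 - 2 / z ^ 3) + (T / z ^ 2 + 2 / z ^ 3) := by
    unfold KK
    rw [intervalIntegral.integral_eq_sub_of_hasDerivAt (fun t _ => hder t)]
    · simp; ring
    · apply Continuous.intervalIntegrable; fun_prop
  have hnz : ‖z‖ = |x| := by rw [hz]; simp
  have hexp : ‖Complex.exp (z * T)‖ = 1 := by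
    rw [hz, show I * (x : ℂ) * T = ((x * T : ℝ) : ℂ) * I by push_cast; ring]
    exact Complex.norm_exp_ofReal_mul_I _
  have h2 : ‖(T : ℂ) / z ^ 2‖ = T / |x| ^ 2 := by
    rw [norm_div, norm_pow, hnz, Complex.norm_real, Real.norm_of_nonneg hT.le]
  have h3 : ‖(2 : ℂ) / z ^ 3‖ ≤ 2 / |x| ^ 2 := by
    rw [norm_div, norm_pow, hnz, Complex.norm_ofNat]
    gcongr
    norm_num
  rw [hint]
  calc _ ≤ ‖Complex.exp (z * T)‖ * (‖(T : ℂ) / z ^ 2‖ + ‖(2 : ℂ) / z ^ 3‖) + (‖(T : ℂ) / z ^ 2‖ + ‖(2 : ℂ) / z ^ 3‖) := by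
        refine (norm_add_le _ _).trans (add_le_add ?_ (norm_add_le _ _))
        rw [norm_mul]
        gcongr
        exact norm_sub_le _ _
    _ ≤ 1 * (T / |x| ^ 2 + 2 / |x| ^ 2) + (T / |x| ^ 2 + 2 / |x| ^ 2) := by
        rw [hexp, h2]; gcongr
    _ = _ := by rw [sq_abs]; ring

lemma expand {ι : Type*} (P : Finset ι) (θ : ι → ℝ) (a : ι → ℂ) (T : ℝ) :
    ((∫ t in (0:ℝ)..T, (t * (T - t)) * ‖∑ k ∈ P, a k * Complex.exp (I * θ k * t)‖ ^ 2 : ℝ) : ℂ)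
    = ∑ k ∈ P, ∑ l ∈ P, a k * (starRingEnd ℂ) (a l) * KK T (θ k - θ l) := by
  rw [← intervalIntegral.integral_ofReal]
  have : ∀ t : ℝ, ((t * (T - t) * ‖∑ k ∈ P, a k * Complex.exp (I * θ k * t)‖ ^ 2 : ℝ) : ℂ)
      = ∑ k ∈ P, ∑ l ∈ P, a k * (starRingEnd ℂ) (a l) * (((t * (T - t) : ℝ) : ℂ) * Complex.exp (I * ((θ k - θ l : ℝ) : ℂ) * t)) := by
    intro t
    rw [Complex.ofReal_mul, Complex.ofReal_pow, ← Complex.mul_conj', map_sum, Finset.sum_mul_sum, Finset.mul_sum]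
    refine Finset.sum_congr rfl fun k _ => ?_
    rw [Finset.mul_sum]
    refine Finset.sum_congr rfl fun l _ => ?_
    rw [map_mul, ← Complex.exp_conj]
    have : Complex.exp (I * ((θ k - θ l : ℝ) : ℂ) * t) = Complex.exp (I * θ k * t) * Complex.exp ((starRingEnd ℂ) (I * θ l * t)) := by
      rw [← Complex.exp_add]; congr 1; simp; ring
    rw [this]; ring
  simp_rw [this]
  rw [intervalIntegral.integral_finsetSum]
  · refine Finset.sum_congr rfl fun k _ => ?_
    rw [intervalIntegral.integral_finsetSum]
    · refine Finset.sum_congr rfl fun l _ => ?_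
      rw [intervalIntegral.integral_const_mul]; rfl
    · intro l _
      apply Continuous.intervalIntegrable; fun_prop
  · intro k _
    apply Continuous.intervalIntegrable; fun_prop

lemma exp_indep (O : Finset ℝ) (T : ℝ) (hT : 0 < T) (a : ℝ → ℂ)
    (h : ∀ t ∈ Set.Ioo 0 T, ∑ o ∈ O, a o * Complex.exp (I * o * t) = 0) : ∀ o ∈ O, a o = 0 := by
  obtain ⟨R, hR⟩ : ∃ R : ℝ, ∀ o ∈ O, |o| ≤ R := by
    refine ⟨∑ o ∈ O, |o|, fun o ho => Finset.single_le_sum (f := fun o => |o|) (fun _ _ => abs_nonneg _) ho⟩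
  set e := O.equivFin.symm with he
  set n := O.card with hn
  set s : ℝ := min (T / (2 * (n + 1))) (1 / (2 * (|R| + 1))) with hs
  have hs0 : 0 < s := by rw [hs]; apply lt_min <;> positivity
  have hs1 : s * (n + 1) ≤ T / 2 := by
    calc s * (n+1) ≤ (T / (2 * (n + 1))) * (n+1) := by gcongr; exact min_le_left _ _
      _ = _ := by field_simp
  have hs2 : s * (|R| + 1) ≤ 1 / 2 := by
    calc s * (|R|+1) ≤ (1 / (2 * (|R| + 1))) * (|R|+1) := by gcongr; exact min_le_right _ _
      _ = _ := by field_simp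
  have key := Matrix.eq_zero_of_forall_pow_sum_mul_pow_eq_zero (R := ℂ) (n := n)
    (f := fun i => Complex.exp (I * (e i : ℝ) * s)) (v := fun i => a (e i) * Complex.exp (I * (e i : ℝ) * ((T / 2 : ℝ) : ℂ)))
    (by
      intro i k hik
      simp only at hik
      have h1 : ∀ i, |(e i : ℝ) * s| ≤ 1 / 2 := by
        intro i
        rw [abs_mul, abs_of_pos hs0]
        have := hR (e i) (e i).2
        have := le_abs_self R
        nlinarith
      have h2 := abs_le.1 (h1 i)
      have h3 := abs_le.1 (h1 k)
      have hpi := Real.pi_gt_three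
      have := Complex.exp_inj_of_neg_pi_lt_of_le_pi (x := I * (e i : ℝ) * s) (y := I * (e k : ℝ) * s)
        (by simp; linarith) (by simp; linarith) (by simp; linarith) (by simp; linarith) hik
      have h4 : ((e i : ℝ) : ℂ) = (e k : ℝ) := by
        have hsc : (s : ℂ) ≠ 0 := by exact_mod_cast hs0.ne'
        exact mul_left_cancel₀ I_ne_zero (mul_right_cancel₀ hsc this)
      exact e.injective (Subtype.ext (by exact_mod_cast h4)))
    (by
      intro i
      have hi : (i : ℝ) + 1 ≤ n + 1 := by
        have := i.2
        have : ((i : ℕ) : ℝ) ≤ n := by exact_mod_cast this.le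
        linarith
      have ht : T / 2 + i * s ∈ Set.Ioo 0 T := by
        constructor
        · positivity
        · nlinarith
      have := h _ ht
      rw [← Finset.sum_coe_sort, ← e.sum_comp] at this
      rw [← this]
      refine Finset.sum_congr rfl fun k _ => ?_
      rw [mul_assoc, ← Complex.exp_nat_mul, ← Complex.exp_add]
      congr 2
      push_cast; ring)
  intro o ho
  have := congrFun key (e.symm ⟨o, ho⟩)
  have h1 : e (e.symm ⟨o, ho⟩) = ⟨o, ho⟩ := e.apply_symm_apply _
  simp only [h1, Pi.zero_apply, mul_eq_zero, Complex.exp_ne_zero, or_false] at this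
  exact this

lemma gram_lower (O : Finset ℝ) (T : ℝ) (hT : 0 < T) : ∃ c : ℝ, 0 < c ∧ ∀ a : ℝ → ℂ,
    c * ∑ o ∈ O, ‖a o‖ ^ 2 ≤ ∫ t in (0:ℝ)..T, (t * (T - t)) * ‖∑ o ∈ O, a o * Complex.exp (I * o * t)‖ ^ 2 := by
  classical
  set Q : EuclideanSpace ℂ O → ℝ := fun a => ∫ t in (0:ℝ)..T, (t * (T - t)) * ‖∑ o : O, a o * Complex.exp (I * (o : ℝ) * t)‖ ^ 2 with hQ
  have hQc : Continuous Q := by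
    apply intervalIntegral.continuous_parametric_intervalIntegral_of_continuous'
    fun_prop
  have hQnn : ∀ a : EuclideanSpace ℂ O, ∀ t ∈ Set.Icc 0 T, 0 ≤ (t * (T - t)) * ‖∑ o : O, a o * Complex.exp (I * (o : ℝ) * t)‖ ^ 2 := by
    intro a t ht
    have := ht.1
    have : 0 ≤ T - t := by linarith [ht.2]
    positivity
  have hQpos : ∀ a, a ≠ 0 → 0 < Q a := by
    intro a ha
    by_contra hcon
    apply ha
    have h0 : ∀ t ∈ Set.Ioo 0 T, ∑ o : O, a o * Complex.exp (I * (o : ℝ) * t) = 0 := by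
      intro t ht
      by_contra hne
      apply hcon
      apply intervalIntegral.integral_pos hT
      · fun_prop
      · intro x hx; exact hQnn a x (Set.Ioc_subset_Icc_self hx)
      · refine ⟨t, Set.Ioo_subset_Icc_self ht, ?_⟩
        have := ht.1
        have : 0 < T - t := by linarith [ht.2]
        have : 0 < ‖∑ o : O, a o * Complex.exp (I * (o : ℝ) * t)‖ := norm_pos_iff.2 hne
        positivity
    have := exp_indep O T hT (fun o => if h : o ∈ O then a ⟨o, h⟩ else 0) (by
      intro t ht
      rw [← h0 t ht, ← Finset.sum_coe_sort]
      refine Finset.sum_congr rfl fun o _ => ?_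
      simp)
    ext o
    have h1 := this o o.2
    simpa using h1
  have hconv : ∀ a : ℝ → ℂ, ∫ t in (0:ℝ)..T, (t * (T - t)) * ‖∑ o ∈ O, a o * Complex.exp (I * o * t)‖ ^ 2 = Q (WithLp.toLp 2 fun o : O => a o) := by
    intro a
    simp only [hQ]
    congr 1; ext t; congr 3
    rw [← Finset.sum_coe_sort]
  have hnorm : ∀ a : ℝ → ℂ, ∑ o ∈ O, ‖a o‖ ^ 2 = ‖(WithLp.toLp 2 fun o : O => a o : EuclideanSpace ℂ O)‖ ^ 2 := by
    intro a
    rw [EuclideanSpace.norm_sq_eq, ← Finset.sum_coe_sort]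
  have hmain : ∃ c : ℝ, 0 < c ∧ ∀ a : EuclideanSpace ℂ O, c * ‖a‖ ^ 2 ≤ Q a := by
    rcases (Metric.sphere (0 : EuclideanSpace ℂ O) 1).eq_empty_or_nonempty with hemp | hne
    · refine ⟨1, one_pos, fun a => ?_⟩
      have : a = 0 := by
        by_contra hane
        have : ((‖a‖⁻¹ : ℝ) : ℂ) • a ∈ Metric.sphere (0 : EuclideanSpace ℂ O) 1 := by
          rw [mem_sphere_zero_iff_norm, norm_smul, Complex.norm_real, norm_inv, norm_norm]
          exact inv_mul_cancel₀ (norm_ne_zero_iff.2 hane)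
        rw [hemp] at this; exact this
      rw [this]
      simp [hQ]
    · obtain ⟨p, hp, hmin⟩ := (isCompact_sphere (0 : EuclideanSpace ℂ O) 1).exists_isMinOn hne hQc.continuousOn
      have hp0 : p ≠ 0 := by
        intro h; rw [h] at hp; simp at hp
      refine ⟨Q p, hQpos p hp0, fun a => ?_⟩
      by_cases hane : a = 0
      · rw [hane]
        simp [hQ]
      · have hmem : ((‖a‖⁻¹ : ℝ) : ℂ) • a ∈ Metric.sphere (0 : EuclideanSpace ℂ O) 1 := by
          rw [mem_sphere_zero_iff_norm, norm_smul, Complex.norm_real, norm_inv, norm_norm]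
          exact inv_mul_cancel₀ (norm_ne_zero_iff.2 hane)
        have h1 : Q p ≤ Q (((‖a‖⁻¹ : ℝ) : ℂ) • a) := hmin hmem
        have h2 : Q (((‖a‖⁻¹ : ℝ) : ℂ) • a) = ‖a‖⁻¹ ^ 2 * Q a := by
          simp only [hQ]
          rw [← intervalIntegral.integral_const_mul]
          congr 1; ext t
          have : ∑ o : O, (((‖a‖⁻¹ : ℝ) : ℂ) • a) o * Complex.exp (I * (o : ℝ) * t) = ((‖a‖⁻¹ : ℝ) : ℂ) * ∑ o : O, a o * Complex.exp (I * (o : ℝ) * t) := by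
            rw [Finset.mul_sum]
            refine Finset.sum_congr rfl fun o _ => ?_
            simp [mul_assoc]
          rw [this, norm_mul, Complex.norm_real, norm_inv, norm_norm]
          ring
        rw [h2] at h1
        have hpos : 0 < ‖a‖ := norm_pos_iff.2 hane
        calc Q p * ‖a‖ ^ 2 ≤ (‖a‖⁻¹ ^ 2 * Q a) * ‖a‖ ^ 2 := by gcongr
          _ = Q a := by field_simp
  obtain ⟨c, hc, h⟩ := hmain
  refine ⟨c, hc, fun a => ?_⟩
  rw [hconv, hnorm]
  exact h _

lemma sep_sum : ∃ C : ℝ, 0 < C ∧ ∀ G : ℝ, 0 < G → ∀ s : Finset ℝ,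
    (∀ x ∈ s, ∀ y ∈ s, x ≠ y → G ≤ |x - y|) → ∀ x ∈ s, ∑ y ∈ s.erase x, 1 / (x - y) ^ 2 ≤ C / G ^ 2 := by
  have hsum : Summable fun m : ℤ => 1 / (m : ℝ) ^ 2 := Real.summable_one_div_int_pow.2 (by norm_num)
  refine ⟨4 * (∑' m : ℤ, 1 / (m : ℝ) ^ 2) + 1, by have : 0 ≤ ∑' m : ℤ, 1 / (m : ℝ) ^ 2 := tsum_nonneg (fun _ => by positivity)
                                                  linarith, ?_⟩
  intro G hG s hs x hx
  have hinj : Set.InjOn (fun y : ℝ => ⌊(y - x) / G⌋) (s.erase x) := by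
    intro y hy z hz hyz
    by_contra hne
    have h1 := hs y (Finset.mem_of_mem_erase hy) z (Finset.mem_of_mem_erase hz) hne
    have h2 := Int.abs_sub_lt_one_of_floor_eq_floor hyz
    rw [← sub_div, abs_div, abs_of_pos hG, div_lt_one hG] at h2
    have : y - x - (z - x) = y - z := by ring
    rw [this] at h2; linarith
  have hb : ∀ y ∈ s.erase x, 1 / (x - y) ^ 2 ≤ 4 / G ^ 2 * (1 / ((⌊(y - x) / G⌋ : ℤ) : ℝ) ^ 2) := by
    intro y hy
    have h1 := hs x hx y (Finset.mem_of_mem_erase hy) (Finset.ne_of_mem_erase hy).symm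
    set u := (y - x) / G with hu
    have hyx : y - x = G * u := by rw [hu]; field_simp
    have hu1 : 1 ≤ |u| := by
      rw [hu, abs_div, abs_of_pos hG, le_div_iff₀ hG, one_mul, abs_sub_comm]; exact h1
    have hfl := Int.floor_le u
    have hfl2 := Int.lt_floor_add_one u
    have hf0 : ((⌊u⌋ : ℤ) : ℝ) ≠ 0 := by
      intro h
      rw [h] at hfl hfl2
      rw [abs_of_nonneg hfl] at hu1; linarith
    have hle : |((⌊u⌋ : ℤ) : ℝ)| ≤ 2 * |u| := by
      rw [abs_le]
      rcases abs_cases u with ⟨h, _⟩ | ⟨h, _⟩ <;> rw [h] at hu1 ⊢ <;> constructor <;> linarith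
    have hsq : ((⌊u⌋ : ℤ) : ℝ) ^ 2 ≤ 4 * u ^ 2 := by
      have := sq_le_sq' (by linarith [abs_nonneg u, abs_nonneg ((⌊u⌋ : ℤ) : ℝ)]) hle
      rw [sq_abs, mul_pow, sq_abs] at this; linarith
    have hpos : 0 < ((⌊u⌋ : ℤ) : ℝ) ^ 2 := by positivity
    rw [show (x - y) ^ 2 = G ^ 2 * u ^ 2 by rw [← mul_pow, ← hyx]; ring]
    have hu2 : 0 < u ^ 2 := by linarith
    rw [div_mul_div_comm, div_le_div_iff₀ (by positivity) (by positivity)]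
    have : 0 < G ^ 2 := by positivity
    nlinarith
  calc _ ≤ ∑ y ∈ s.erase x, 4 / G ^ 2 * (1 / ((⌊(y - x) / G⌋ : ℤ) : ℝ) ^ 2) := Finset.sum_le_sum hb
    _ = 4 / G ^ 2 * ∑ m ∈ (s.erase x).image (fun y : ℝ => ⌊(y - x) / G⌋), 1 / (m : ℝ) ^ 2 := by
        rw [← Finset.mul_sum, Finset.sum_image hinj]
    _ ≤ 4 / G ^ 2 * ∑' m : ℤ, 1 / (m : ℝ) ^ 2 := by
        gcongr
        exact hsum.sum_le_tsum _ (fun _ _ => by positivity)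
    _ ≤ _ := by
        rw [div_mul_eq_mul_div]; gcongr; linarith

lemma ingham (O : Finset ℝ) (T : ℝ) (hT : 0 < T) : ∃ G c : ℝ, 0 < G ∧ 0 < c ∧ (∀ o ∈ O, 4 * |o| < G) ∧
    ∀ s : Finset ℝ, (∀ x ∈ s, ∀ y ∈ s, x ≠ y → G ≤ |x - y|) → ∀ a : ℝ × ℝ → ℂ,
      c * ∑ k ∈ s ×ˢ O, ‖a k‖ ^ 2 ≤
        ∫ t in (0:ℝ)..T, ‖∑ k ∈ s ×ˢ O, a k * Complex.exp (I * ((k.1 + k.2 : ℝ) : ℂ) * t)‖ ^ 2 := by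
  obtain ⟨c0, hc0, hgram⟩ := gram_lower O T hT
  obtain ⟨C, hC, hsep⟩ := sep_sum
  obtain ⟨R, hR0, hR⟩ : ∃ R : ℝ, 0 ≤ R ∧ ∀ o ∈ O, |o| ≤ R := by
    refine ⟨∑ o ∈ O, |o|, Finset.sum_nonneg (fun _ _ => abs_nonneg _), fun o ho => Finset.single_le_sum (f := fun o => |o|) (fun _ _ => abs_nonneg _) ho⟩
  set n : ℝ := (O.card : ℝ) with hn
  have hn0 : 0 ≤ n := by positivity
  set D : ℝ := 4 * (2 * T + 4) with hD
  have hD0 : 0 < D := by positivity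
  set G : ℝ := 2 + 4 * R + 2 * (n * D * C) / c0 with hG
  have hG1 : 2 * (n * D * C) / c0 ≤ G := by linarith
  have hG1' : 0 ≤ 2 * (n * D * C) / c0 := by positivity
  have hG2 : 2 + 4 * R ≤ G := by linarith
  have hGsq : n * D * (C / G ^ 2) ≤ c0 / 2 := by
    have h1 : 2 * (n * D * C) / c0 ≤ G ^ 2 := by nlinarith
    rw [div_le_iff₀ hc0] at h1
    have hGp : 0 < G ^ 2 := by nlinarith
    rw [← mul_div_assoc, div_le_iff₀ hGp]
    nlinarith
  refine ⟨G, c0 / 2 / T ^ 2, by linarith, by positivity, fun o ho => by linarith [hR o ho], ?_⟩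
  intro s hs a
  set S : ℝ → ℝ := fun x => ∑ o ∈ O, ‖a (x, o)‖ ^ 2 with hS
  set B : ℝ → ℝ → ℂ := fun x y => ∑ o ∈ O, ∑ o' ∈ O, a (x, o) * (starRingEnd ℂ) (a (y, o')) * KK T ((x + o) - (y + o')) with hB
  set q : ℝ := ∫ t in (0:ℝ)..T, (t * (T - t)) * ‖∑ k ∈ s ×ˢ O, a k * Complex.exp (I * ((k.1 + k.2 : ℝ) : ℂ) * t)‖ ^ 2 with hq
  have hqB : (q : ℂ) = ∑ x ∈ s, ∑ y ∈ s, B x y := by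
    rw [hq, expand (s ×ˢ O) (fun k => k.1 + k.2) a T, Finset.sum_product]
    refine Finset.sum_congr rfl fun x _ => ?_
    simp only [hB]
    refine Eq.trans ?_ Finset.sum_comm
    refine Finset.sum_congr rfl fun o _ => ?_
    rw [Finset.sum_product]
  have hdiag : ∀ x, c0 * S x ≤ (B x x).re := by
    intro x
    have h1 := hgram (fun o => a (x, o))
    have h2 := expand O (fun o => o) (fun o => a (x, o)) T
    have h3 : B x x = ((∫ t in (0:ℝ)..T, (t * (T - t)) * ‖∑ o ∈ O, a (x, o) * Complex.exp (I * o * t)‖ ^ 2 : ℝ) : ℂ) := by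
      rw [h2]
      simp only [hB, add_sub_add_left_eq_sub]
    rw [h3, Complex.ofReal_re]
    exact h1
  have hoff : ∀ x ∈ s, ∀ y ∈ s, x ≠ y → ‖B x y‖ ≤ D / (x - y) ^ 2 * (n * (S x + S y) / 2) := by
    intro x hx y hy hxy
    have hg := hs x hx y hy hxy
    have hxy2 : 0 < (x - y) ^ 2 := by have := sub_ne_zero.2 hxy; positivity
    have hK : ∀ o ∈ O, ∀ o' ∈ O, ‖KK T ((x + o) - (y + o'))‖ ≤ D / (x - y) ^ 2 := by
      intro o ho o' ho'
      have h1 := hR o ho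
      have h2 := hR o' ho'
      have h3 : |x - y| / 2 ≤ |(x + o) - (y + o')| := by
        have : x - y = ((x + o) - (y + o')) - (o - o') := by ring
        have h4 : |x - y| ≤ |(x + o) - (y + o')| + |o - o'| := by
          conv_lhs => rw [this]
          exact abs_sub _ _
        have h5 : |o - o'| ≤ |o| + |o'| := abs_sub _ _
        linarith
      refine (KK_bound T _ hT (by linarith)).trans ?_
      have h6 : (x - y) ^ 2 / 4 ≤ ((x + o) - (y + o')) ^ 2 := by
        rw [← sq_abs (x - y), ← sq_abs ((x + o) - (y + o'))]
        have := abs_nonneg (x - y)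
        nlinarith
      calc (2 * T + 4) / ((x + o) - (y + o')) ^ 2 ≤ (2 * T + 4) / ((x - y) ^ 2 / 4) := by gcongr
        _ = _ := by rw [hD]; field_simp
    calc ‖B x y‖ ≤ ∑ o ∈ O, ∑ o' ∈ O, (‖a (x, o)‖ ^ 2 + ‖a (y, o')‖ ^ 2) / 2 * (D / (x - y) ^ 2) := by
          refine (norm_sum_le _ _).trans (Finset.sum_le_sum fun o ho => ?_)
          refine (norm_sum_le _ _).trans (Finset.sum_le_sum fun o' ho' => ?_)
          rw [norm_mul, norm_mul, RCLike.norm_conj]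
          refine mul_le_mul ?_ (hK o ho o' ho') (norm_nonneg _) (by positivity)
          nlinarith [sq_nonneg (‖a (x, o)‖ - ‖a (y, o')‖)]
      _ = _ := by
          simp_rw [← Finset.sum_mul, ← Finset.sum_div, Finset.sum_add_distrib, Finset.sum_const, nsmul_eq_mul]
          rw [← Finset.mul_sum]
          simp only [hS, hn]
          ring
  have hq1 : q = ∑ x ∈ s, ((B x x).re + ∑ y ∈ s.erase x, (B x y).re) := by
    have := congrArg Complex.re hqB
    rw [Complex.ofReal_re, Complex.re_sum] at this
    rw [this]
    refine Finset.sum_congr rfl fun x hx => ?_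
    rw [Complex.re_sum, Finset.add_sum_erase _ (fun y => (B x y).re) hx]
  have hoffsum : ∑ x ∈ s, ∑ y ∈ s.erase x, ‖B x y‖ ≤ c0 / 2 * ∑ x ∈ s, S x := by
    have e1 : ∀ f : ℝ → ℝ → ℝ, ∑ x ∈ s, ∑ y ∈ s.erase x, f x y = ∑ x ∈ s, ∑ y ∈ s.erase x, f y x := by
      intro f
      apply Finset.sum_comm'
      intro x y
      simp only [Finset.mem_erase]
      tauto
    have e2 : ∑ x ∈ s, ∑ y ∈ s.erase x, (D * n) * (1 / (x - y) ^ 2) * S x ≤ c0 / 2 * ∑ x ∈ s, S x := by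
      rw [Finset.mul_sum]
      refine Finset.sum_le_sum fun x hx => ?_
      rw [← Finset.sum_mul, ← Finset.mul_sum]
      have hSx : 0 ≤ S x := Finset.sum_nonneg fun _ _ => by positivity
      refine mul_le_mul_of_nonneg_right ?_ hSx
      refine le_trans ?_ hGsq
      rw [mul_comm D n]
      gcongr
      exact hsep G (by linarith) s hs x hx
    calc _ ≤ ∑ x ∈ s, ∑ y ∈ s.erase x, D / (x - y) ^ 2 * (n * (S x + S y) / 2) := by
          refine Finset.sum_le_sum fun x hx => Finset.sum_le_sum fun y hy => ?_
          exact hoff x hx y (Finset.mem_of_mem_erase hy) (Finset.ne_of_mem_erase hy).symm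
      _ = (∑ x ∈ s, ∑ y ∈ s.erase x, (D * n) * (1 / (x - y) ^ 2) * S x + ∑ x ∈ s, ∑ y ∈ s.erase x, (D * n) * (1 / (x - y) ^ 2) * S y) / 2 := by
          rw [← Finset.sum_add_distrib, Finset.sum_div]
          refine Finset.sum_congr rfl fun x _ => ?_
          rw [← Finset.sum_add_distrib, Finset.sum_div]
          refine Finset.sum_congr rfl fun y _ => ?_
          ring
      _ = ∑ x ∈ s, ∑ y ∈ s.erase x, (D * n) * (1 / (x - y) ^ 2) * S x := by
          rw [e1 (fun x y => (D * n) * (1 / (x - y) ^ 2) * S y)]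
          have : ∀ x y : ℝ, (y - x) ^ 2 = (x - y) ^ 2 := fun x y => by ring
          simp_rw [this]
          ring
      _ ≤ _ := e2
  have hqlow : c0 / 2 * ∑ x ∈ s, S x ≤ q := by
    have h1 : ∑ x ∈ s, (c0 * S x - ∑ y ∈ s.erase x, ‖B x y‖) ≤ q := by
      rw [hq1]
      refine Finset.sum_le_sum fun x hx => ?_
      have : - ∑ y ∈ s.erase x, ‖B x y‖ ≤ ∑ y ∈ s.erase x, (B x y).re := by
        rw [← Finset.sum_neg_distrib]
        refine Finset.sum_le_sum fun y _ => ?_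
        exact (abs_le.1 (Complex.abs_re_le_norm _)).1
      linarith [hdiag x]
    rw [Finset.sum_sub_distrib, ← Finset.mul_sum] at h1
    linarith
  have hup : q ≤ T ^ 2 * ∫ t in (0:ℝ)..T, ‖∑ k ∈ s ×ˢ O, a k * Complex.exp (I * ((k.1 + k.2 : ℝ) : ℂ) * t)‖ ^ 2 := by
    rw [hq, ← intervalIntegral.integral_const_mul]
    apply intervalIntegral.integral_mono_on hT.le
    · apply Continuous.intervalIntegrable; fun_prop
    · apply Continuous.intervalIntegrable; fun_prop
    · intro t ht
      gcongr
      nlinarith [ht.1, ht.2]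
  rw [Finset.sum_product]
  rw [div_mul_eq_mul_div, div_le_iff₀ (by positivity), mul_comm _ (T ^ 2)]
  exact hqlow.trans hup

lemma riesz_moment {κ H : Type*} [NormedAddCommGroup H] [InnerProductSpace ℂ H] [CompleteSpace H]
    (h : κ → H) (D : κ → ℂ) (K : ℝ)
    (hb : ∀ a : κ →₀ ℂ, ‖Finsupp.linearCombination ℂ D a‖ ≤ K * ‖Finsupp.linearCombination ℂ h a‖) :
    ∃ w : H, ∀ k, inner ℂ w (h k) = D k := by
  set L := Finsupp.linearCombination ℂ h with hL
  set Dm := Finsupp.linearCombination ℂ D with hDm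
  have hker : LinearMap.ker L ≤ LinearMap.ker Dm := by
    intro a ha
    rw [LinearMap.mem_ker] at ha ⊢
    have := hb a
    rw [ha, norm_zero, mul_zero] at this
    exact norm_le_zero_iff.1 this
  set f0 : LinearMap.range L →ₗ[ℂ] ℂ := ((LinearMap.ker L).liftQ Dm hker) ∘ₗ (L.quotKerEquivRange.symm : LinearMap.range L →ₗ[ℂ] _) with hf0
  have hf0a : ∀ a (ha : L a ∈ LinearMap.range L), f0 ⟨L a, ha⟩ = Dm a := by
    intro a ha
    rw [hf0, LinearMap.comp_apply]
    have := L.quotKerEquivRange_symm_apply_image a ha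
    erw [this]
    simp
  set f := f0.mkContinuous K (by
    rintro ⟨x, hx⟩
    obtain ⟨a, rfl⟩ := LinearMap.mem_range.1 hx
    rw [hf0a]
    exact hb a) with hf
  obtain ⟨g, hg, _⟩ := exists_extension_norm_eq _ f
  refine ⟨(InnerProductSpace.toDual ℂ H).symm g, fun k => ?_⟩
  rw [InnerProductSpace.toDual_symm_apply]
  have hk : L (Finsupp.single k 1) = h k := by simp [hL]
  have h1 := hg ⟨L (Finsupp.single k 1), LinearMap.mem_range_self L _⟩
  simp only [hf, LinearMap.mkContinuous_apply] at h1
  rw [hf0a, hk] at h1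
  rw [h1]; simp [hDm]

def Supp (T : ℝ) (w : ℝ → ℂ) : Prop := MemLp w 2 volume ∧ ∀ t, t ∉ Set.Ioc 0 T → w t = 0

noncomputable def Mom (w : ℝ → ℂ) (θ : ℝ) : ℂ := ∫ t : ℝ, w t * Complex.exp (I * θ * t)

lemma memLp_exp (T θ : ℝ) : MemLp (fun t : ℝ => Complex.exp (I * θ * t)) 2 (volume.restrict (Set.Ioc 0 T)) := by
  refine MemLp.of_bound (Continuous.aestronglyMeasurable (by fun_prop)) 1 (Filter.Eventually.of_forall fun t => ?_)
  rw [show I * (θ : ℂ) * t = ((θ * t : ℝ) : ℂ) * I by push_cast; ring, Complex.norm_exp_ofReal_mul_I]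

lemma interp (O : Finset ℝ) (T : ℝ) (hT : 0 < T) : ∃ G : ℝ, 0 < G ∧ (∀ o ∈ O, 4 * |o| < G) ∧
    ∀ B : Set ℝ, (∀ x ∈ B, ∀ y ∈ B, x ≠ y → G ≤ |x - y|) →
    ∀ (E : ℝ → ℂ) (KE : ℝ), (∀ s : Finset ℝ, ∑ y ∈ s, ‖E y‖ ^ 2 ≤ KE) →
    ∃ w, Supp T w ∧ ∀ x ∈ B, ∀ o ∈ O, Mom w (x + o) = E (x + o) := by
  classical
  obtain ⟨G, c, hG, hc, hO, hing⟩ := ingham O T hT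
  refine ⟨G, hG, hO, fun B hB E KE hE => ?_⟩
  have hKE : 0 ≤ KE := by simpa using hE ∅
  set μ := (volume.restrict (Set.Ioc 0 T) : Measure ℝ) with hμ
  set eL : ℝ → Lp ℂ 2 μ := fun θ => (memLp_exp T θ).toLp with heL
  set h : ℝ × ℝ → Lp ℂ 2 μ := fun k => if k.1 ∈ B ∧ k.2 ∈ O then eL (k.1 + k.2) else 0 with hh
  set D : ℝ × ℝ → ℂ := fun k => if k.1 ∈ B ∧ k.2 ∈ O then E (k.1 + k.2) else 0 with hD
  have hred : ∀ {M : Type} [AddCommGroup M] [Module ℂ M] (F : ℝ → M) (a : ℝ × ℝ →₀ ℂ),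
      Finsupp.linearCombination ℂ (fun k : ℝ × ℝ => if k.1 ∈ B ∧ k.2 ∈ O then F (k.1 + k.2) else 0) a
       = ∑ k ∈ ((a.support.image Prod.fst).filter (· ∈ B)) ×ˢ O, a k • F (k.1 + k.2) := by
    intro M _ _ F a
    rw [Finsupp.linearCombination_apply, Finsupp.sum]
    set s' := ((a.support.image Prod.fst).filter (· ∈ B)) ×ˢ O with hs'
    have h1 : ∑ k ∈ s', a k • F (k.1 + k.2) = ∑ k ∈ s', a k • (if k.1 ∈ B ∧ k.2 ∈ O then F (k.1 + k.2) else 0) := by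
      refine Finset.sum_congr rfl fun k hk => ?_
      rw [hs', Finset.mem_product, Finset.mem_filter] at hk
      rw [if_pos ⟨hk.1.2, hk.2⟩]
    rw [h1]
    rw [Finset.sum_subset (Finset.subset_union_left (s₂ := s')), ← Finset.sum_subset (Finset.subset_union_right (s₁ := a.support))]
    · intro k hk hk'
      rw [Finset.mem_union, or_iff_left hk'] at hk
      rw [if_neg, smul_zero]
      rintro ⟨h2, h3⟩
      apply hk'
      rw [hs', Finset.mem_product, Finset.mem_filter]
      exact ⟨⟨Finset.mem_image_of_mem _ hk, h2⟩, h3⟩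
    · intro k _ hk
      rw [Finsupp.notMem_support_iff.1 hk, zero_smul]
  obtain ⟨w, hw⟩ := riesz_moment h D (Real.sqrt (KE / c)) (by
    intro a
    rw [hh, hD, hred, hred]
    set s0 := (a.support.image Prod.fst).filter (· ∈ B) with hs0
    have hs0B : ∀ x ∈ s0, x ∈ B := fun x hx => (Finset.mem_filter.1 hx).2
    have hing' := hing s0 (fun x hx y hy => hB x (hs0B x hx) y (hs0B y hy)) a
    have hnorm : ‖∑ k ∈ s0 ×ˢ O, a k • eL (k.1 + k.2)‖ ^ 2 = ∫ t in (0:ℝ)..T, ‖∑ k ∈ s0 ×ˢ O, a k * Complex.exp (I * ((k.1 + k.2 : ℝ) : ℂ) * t)‖ ^ 2 := by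
      rw [← @inner_self_eq_norm_sq ℂ, MeasureTheory.L2.inner_def, intervalIntegral.integral_of_le hT.le]
      have hae : (∑ k ∈ s0 ×ˢ O, a k • eL (k.1 + k.2) : Lp ℂ 2 μ) =ᵐ[μ] fun t => ∑ k ∈ s0 ×ˢ O, a k * Complex.exp (I * ((k.1 + k.2 : ℝ) : ℂ) * t) := by
        refine (Lp.coeFn_fun_finsetSum _ _).trans ?_
        have : ∀ k ∈ s0 ×ˢ O, ∀ᵐ t ∂μ, (a k • eL (k.1 + k.2) : Lp ℂ 2 μ) t = a k * Complex.exp (I * ((k.1 + k.2 : ℝ) : ℂ) * t) := by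
          intro k _
          filter_upwards [Lp.coeFn_smul (a k) (eL (k.1 + k.2)), (memLp_exp T (k.1 + k.2)).coeFn_toLp] with t h1 h2
          rw [h1, Pi.smul_apply, smul_eq_mul]
          congr 1
        filter_upwards [(Finset.eventually_all (s0 ×ˢ O)).2 this] with t ht
        exact Finset.sum_congr rfl ht
      have : ∫ t, inner ℂ ((∑ k ∈ s0 ×ˢ O, a k • eL (k.1 + k.2) : Lp ℂ 2 μ) t) ((∑ k ∈ s0 ×ˢ O, a k • eL (k.1 + k.2) : Lp ℂ 2 μ) t) ∂μ
          = ∫ t, ((‖∑ k ∈ s0 ×ˢ O, a k * Complex.exp (I * ((k.1 + k.2 : ℝ) : ℂ) * t)‖ ^ 2 : ℝ) : ℂ) ∂μ := by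
        apply integral_congr_ae
        filter_upwards [hae] with t ht
        rw [ht, inner_self_eq_norm_sq_to_K]
        push_cast; rfl
      rw [this, integral_complex_ofReal]
      simp [hμ]
    have hinj : Set.InjOn (fun k : ℝ × ℝ => k.1 + k.2) ((s0 ×ˢ O : Finset (ℝ × ℝ)) : Set (ℝ × ℝ)) := by
      intro k hk l hl hkl
      rw [Finset.mem_coe, Finset.mem_product] at hk hl
      simp only at hkl
      have h1 := hO k.2 hk.2
      have h2 := hO l.2 hl.2
      have h3 : k.1 = l.1 := by
        by_contra hne
        have h4 := hB k.1 (hs0B _ hk.1) l.1 (hs0B _ hl.1) hne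
        rw [show k.1 - l.1 = l.2 - k.2 by linarith] at h4
        have h5 : |l.2 - k.2| ≤ |l.2| + |k.2| := abs_sub _ _
        linarith
      exact Prod.ext h3 (by linarith)
    have hEs : ∑ k ∈ s0 ×ˢ O, ‖E (k.1 + k.2)‖ ^ 2 ≤ KE := by
      have := hE ((s0 ×ˢ O).image fun k : ℝ × ℝ => k.1 + k.2)
      rwa [Finset.sum_image hinj] at this
    rw [← hnorm] at hing'
    set f := ∑ k ∈ s0 ×ˢ O, a k • eL (k.1 + k.2) with hf
    have h1 : ‖∑ k ∈ s0 ×ˢ O, a k • E (k.1 + k.2)‖ ≤ ∑ k ∈ s0 ×ˢ O, ‖a k‖ * ‖E (k.1 + k.2)‖ := by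
      refine (norm_sum_le _ _).trans (Finset.sum_le_sum fun k _ => ?_)
      rw [smul_eq_mul, norm_mul]
    have h2 := Finset.sum_mul_sq_le_sq_mul_sq (s0 ×ˢ O) (fun k => ‖a k‖) (fun k => ‖E (k.1 + k.2)‖)
    have h3 : ∑ k ∈ s0 ×ˢ O, ‖a k‖ ^ 2 ≤ ‖f‖ ^ 2 / c := by rw [le_div_iff₀ hc]; linarith
    have h4 : (∑ k ∈ s0 ×ˢ O, ‖a k‖ * ‖E (k.1 + k.2)‖) ^ 2 ≤ (KE / c) * ‖f‖ ^ 2 := by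
      refine h2.trans ?_
      calc _ ≤ ‖f‖ ^ 2 / c * KE := by
            gcongr
        _ = _ := by ring
    refine h1.trans ?_
    apply le_of_sq_le_sq _ (by positivity)
    rw [mul_pow, Real.sq_sqrt (by positivity)]
    exact h4)
  refine ⟨(Set.Ioc 0 T).indicator (fun t => (starRingEnd ℂ) (w t)), ⟨?_, ?_⟩, ?_⟩
  · rw [memLp_indicator_iff_restrict measurableSet_Ioc]
    exact (Lp.memLp w).star
  · intro t ht
    exact Set.indicator_of_notMem ht _
  · intro x hx o ho
    have := hw (x, o)
    simp only [hh, hD, hx, ho, and_self, if_true] at this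
    rw [← this, MeasureTheory.L2.inner_def, Mom]
    have h1 : ∀ t : ℝ, (Set.Ioc 0 T).indicator (fun t => (starRingEnd ℂ) (w t)) t * Complex.exp (I * ((x + o : ℝ) : ℂ) * t) =
        (Set.Ioc 0 T).indicator (fun t => (starRingEnd ℂ) (w t) * Complex.exp (I * ((x + o : ℝ) : ℂ) * t)) t := by
      intro t
      by_cases ht : t ∈ Set.Ioc 0 T <;> simp [ht]
    simp_rw [h1]
    rw [integral_indicator measurableSet_Ioc]
    apply integral_congr_ae
    filter_upwards [(memLp_exp T (x + o)).coeFn_toLp] with t ht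
    simp only [heL]
    rw [ht, RCLike.inner_apply, mul_comm]

noncomputable def tm (w : ℝ → ℂ) : ℂ := ∫ t : ℝ, w t * (t : ℂ)

lemma Supp.int {T : ℝ} {w : ℝ → ℂ} (h : Supp T w) (φ : ℝ → ℂ) (hφ : Continuous φ) :
    Integrable (fun t => w t * φ t) := by
  have h1 : IntegrableOn w (Set.Ioc 0 T) := (h.1.restrict (Set.Ioc 0 T)).integrable (by norm_num)
  have h2 : IntegrableOn (fun t => w t * φ t) (Set.Ioc 0 T) :=
    h1.mul_continuousOn_of_subset hφ.continuousOn measurableSet_Ioc isCompact_Icc Set.Ioc_subset_Icc_self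
  rwa [integrableOn_iff_integrable_of_support_subset] at h2
  intro t ht
  by_contra hn
  apply ht
  simp [h.2 t hn]

lemma Supp.mono {T T' : ℝ} {w : ℝ → ℂ} (h : Supp T w) (hT : T ≤ T') : Supp T' w :=
  ⟨h.1, fun t ht => h.2 t fun h' => ht ⟨h'.1, h'.2.trans hT⟩⟩

lemma Supp.add {T : ℝ} {w v : ℝ → ℂ} (h : Supp T w) (h' : Supp T v) : Supp T (fun t => w t + v t) :=
  ⟨h.1.add h'.1, fun t ht => by simp [h.2 t ht, h'.2 t ht]⟩

lemma Supp.smul {T : ℝ} {w : ℝ → ℂ} (h : Supp T w) (c : ℂ) : Supp T (fun t => c * w t) :=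
  ⟨h.1.const_mul c, fun t ht => by simp [h.2 t ht]⟩

lemma Supp.sum {ι : Type*} {T : ℝ} (F : Finset ι) {v : ι → ℝ → ℂ} (h : ∀ i, Supp T (v i)) :
    Supp T (fun t => ∑ i ∈ F, v i t) :=
  ⟨memLp_finsetSum F fun i _ => (h i).1, fun t ht => Finset.sum_eq_zero fun i _ => (h i).2 t ht⟩

lemma cexp_cont (θ : ℝ) : Continuous fun t : ℝ => Complex.exp (I * θ * t) := by fun_prop

lemma Mom_add {T : ℝ} {w v : ℝ → ℂ} (h : Supp T w) (h' : Supp T v) (θ : ℝ) :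
    Mom (fun t => w t + v t) θ = Mom w θ + Mom v θ := by
  simp only [Mom, add_mul]
  exact integral_add (h.int _ (cexp_cont θ)) (h'.int _ (cexp_cont θ))

lemma tm_add {T : ℝ} {w v : ℝ → ℂ} (h : Supp T w) (h' : Supp T v) :
    tm (fun t => w t + v t) = tm w + tm v := by
  simp only [tm, add_mul]
  exact integral_add (h.int _ Complex.continuous_ofReal) (h'.int _ Complex.continuous_ofReal)

lemma Mom_smul (w : ℝ → ℂ) (c : ℂ) (θ : ℝ) : Mom (fun t => c * w t) θ = c * Mom w θ := by
  simp only [Mom, mul_assoc]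
  exact integral_const_mul _ _

lemma tm_smul (w : ℝ → ℂ) (c : ℂ) : tm (fun t => c * w t) = c * tm w := by
  simp only [tm, mul_assoc]
  exact integral_const_mul _ _

lemma Mom_sum {ι : Type*} {T : ℝ} (F : Finset ι) {v : ι → ℝ → ℂ} (h : ∀ i, Supp T (v i)) (θ : ℝ) :
    Mom (fun t => ∑ i ∈ F, v i t) θ = ∑ i ∈ F, Mom (v i) θ := by
  simp only [Mom, Finset.sum_mul]
  exact integral_finsetSum _ fun i _ => (h i).int _ (cexp_cont θ)

noncomputable def Sh (θ s : ℝ) (w : ℝ → ℂ) (t : ℝ) : ℂ := Complex.exp (-(I * θ * s)) * w (t - s) + (-1) * w t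

lemma Supp.shift {T : ℝ} {w : ℝ → ℂ} (h : Supp T w) (s : ℝ) (hs : 0 ≤ s) : Supp (T + s) (fun t => w (t - s)) :=
  ⟨h.1.comp_measurePreserving (measurePreserving_sub_right volume s), fun t ht => h.2 _ fun h' => ht ⟨by linarith [h'.1], by linarith [h'.2]⟩⟩

lemma Mom_tr (w : ℝ → ℂ) (s z : ℝ) : Mom (fun t => w (t - s)) z = Complex.exp (I * z * s) * Mom w z := by
  have := integral_sub_right_eq_self (μ := volume) (fun t : ℝ => w t * Complex.exp (I * z * ((t + s : ℝ) : ℂ))) s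
  simp only [sub_add_cancel] at this
  rw [Mom, this, Mom, ← integral_const_mul]
  congr 1; ext t
  rw [show I * (z : ℂ) * ((t + s : ℝ) : ℂ) = I * z * s + I * z * t by push_cast; ring, Complex.exp_add]
  ring

lemma tm_tr {T : ℝ} {w : ℝ → ℂ} (h : Supp T w) (s : ℝ) : tm (fun t => w (t - s)) = tm w + s * Mom w 0 := by
  have := integral_sub_right_eq_self (μ := volume) (fun t : ℝ => w t * ((t + s : ℝ) : ℂ)) s
  simp only [sub_add_cancel] at this
  rw [tm, this, tm, Mom, ← integral_const_mul, ← integral_add (h.int _ Complex.continuous_ofReal)]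
  · congr 1; ext t
    push_cast
    simp; ring
  · exact (h.int _ (cexp_cont 0)).const_mul _

lemma Supp.Sh {T : ℝ} {w : ℝ → ℂ} (h : Supp T w) (θ s : ℝ) (hs : 0 ≤ s) : Supp (T + s) (Sh θ s w) :=
  ((h.shift s hs).smul _).add ((h.mono (by linarith)).smul (-1))

lemma Mom_Sh {T : ℝ} {w : ℝ → ℂ} (h : Supp T w) (θ s : ℝ) (hs : 0 ≤ s) (z : ℝ) :
    Mom (Sh θ s w) z = (Complex.exp (I * ((z - θ : ℝ) : ℂ) * s) - 1) * Mom w z := by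
  have := Mom_add ((h.shift s hs).smul (Complex.exp (-(I * θ * s)))) ((h.mono (by linarith : T ≤ T + s)).smul (-1)) z
  unfold Sh
  rw [this, Mom_smul, Mom_smul, Mom_tr, show I * ((z - θ : ℝ) : ℂ) * s = -(I * θ * s) + I * z * s by push_cast; ring, Complex.exp_add]
  ring

lemma tm_Sh {T : ℝ} {w : ℝ → ℂ} (h : Supp T w) (s : ℝ) (hs : 0 ≤ s) :
    tm (Sh 0 s w) = s * Mom w 0 := by
  have := tm_add ((h.shift s hs).smul (Complex.exp (-(I * (0:ℝ) * s)))) ((h.mono (by linarith : T ≤ T + s)).smul (-1))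
  unfold Sh
  rw [this, tm_smul, tm_smul, tm_tr h]
  simp

lemma step {T1 T2 : ℝ} (hT : T1 < T2) {w : ℝ → ℂ} (h : Supp T1 w) (μ θ : ℝ) (hne : μ ≠ θ) (hw : Mom w μ ≠ 0) :
    ∃ s, 0 < s ∧ Supp T2 (Sh θ s w) ∧ Mom (Sh θ s w) μ ≠ 0 ∧ Mom (Sh θ s w) θ = 0 ∧
      ∀ z, Mom w z = 0 → Mom (Sh θ s w) z = 0 := by
  have hd : 0 < |μ - θ| := abs_pos.2 (sub_ne_zero.2 hne)
  set s := min (T2 - T1) (1 / |μ - θ|) with hs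
  have hs0 : 0 < s := lt_min (by linarith) (by positivity)
  have hs1 : s ≤ T2 - T1 := min_le_left _ _
  have hs2 : s * |μ - θ| ≤ 1 := by
    calc s * |μ - θ| ≤ (1 / |μ - θ|) * |μ - θ| := by gcongr; exact min_le_right _ _
      _ = 1 := by field_simp
  refine ⟨s, hs0, (h.Sh θ s hs0.le).mono (by linarith), ?_, ?_, ?_⟩
  · rw [Mom_Sh h θ s hs0.le]
    refine mul_ne_zero (fun hz => ?_) hw
    have hz : Complex.exp (I * ((μ - θ : ℝ) : ℂ) * s) = Complex.exp 0 := by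
      rw [Complex.exp_zero]; linear_combination hz
    have hb : |(μ - θ) * s| ≤ 1 := by rw [abs_mul, abs_of_pos hs0, mul_comm]; exact hs2
    have hb' := abs_le.1 hb
    have hpi := Real.pi_gt_three
    have him : (I * ((μ - θ : ℝ) : ℂ) * s).im = (μ - θ) * s := by
      rw [show I * ((μ - θ : ℝ) : ℂ) * s = (((μ - θ) * s : ℝ) : ℂ) * I by push_cast; ring]
      simp only [Complex.mul_im, Complex.ofReal_re, Complex.ofReal_im, Complex.I_im, Complex.I_re]; ring
    have := Complex.exp_inj_of_neg_pi_lt_of_le_pi (by rw [him]; linarith) (by rw [him]; linarith)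
      (by simp; linarith) (by simp; linarith) hz
    have h2 := congrArg Complex.im this
    rw [him, Complex.zero_im] at h2
    exact (mul_ne_zero (sub_ne_zero.2 hne) hs0.ne') h2
  · rw [Mom_Sh h θ s hs0.le]; simp
  · intro z hz
    rw [Mom_Sh h θ s hs0.le, hz, mul_zero]

lemma kill (F : Finset ℝ) (μ : ℝ) (hμ : μ ∉ F) : ∀ {T1 T2 : ℝ} (_ : T1 < T2) {w : ℝ → ℂ} (_ : Supp T1 w) (_ : Mom w μ ≠ 0),
    ∃ v, Supp T2 v ∧ Mom v μ ≠ 0 ∧ (∀ z ∈ F, Mom v z = 0) ∧ ∀ z, Mom w z = 0 → Mom v z = 0 := by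
  classical
  induction F using Finset.induction_on with
  | empty => intro T1 T2 hT w h hw; exact ⟨w, h.mono hT.le, hw, by simp, fun z hz => hz⟩
  | insert θ F hθ ih =>
    intro T1 T2 hT w h hw
    rw [Finset.mem_insert, not_or] at hμ
    obtain ⟨v, hv1, hv2, hv3, hv4⟩ := ih hμ.2 (show T1 < (T1 + T2) / 2 by linarith) h hw
    obtain ⟨s, hs, h1, h2, h3, h4⟩ := step (show (T1 + T2) / 2 < T2 by linarith) hv1 μ θ hμ.1 hv2
    refine ⟨_, h1, h2, ?_, fun z hz => h4 z (hv4 z hz)⟩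
    intro z hz
    rcases Finset.mem_insert.1 hz with rfl | hz
    · exact h3
    · exact h4 z (hv3 z hz)

section main
variable (lam : ℕ → ℝ) (P : Finset ℝ)
  (hlam : ∀ G : ℝ, ∃ N, 1 ≤ N ∧ ∀ m, N ≤ m → G ≤ lam m ∧ ∀ n, m < n → G ≤ lam n - lam m)

def XX : Set ℝ := {x | x = 0 ∨ ∃ n, ∃ p ∈ P, x = lam n - p ∨ x = p - lam n}

lemma finX (N : ℕ) : ∃ F : Finset ℝ, (0 : ℝ) ∈ F ∧ ∀ x ∈ XX lam P, x ∈ F ∨ ∃ n, N ≤ n ∧ ∃ p ∈ P, x = lam n - p ∨ x = p - lam n := by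
  classical
  refine ⟨insert 0 (((Finset.range N) ×ˢ P).image (fun k => lam k.1 - k.2) ∪ ((Finset.range N) ×ˢ P).image (fun k => k.2 - lam k.1)), by simp, ?_⟩
  rintro x (rfl | ⟨n, p, hp, hx⟩)
  · left; simp
  · by_cases hn : N ≤ n
    · exact Or.inr ⟨n, hn, p, hp, hx⟩
    · left
      have hmem : (n, p) ∈ (Finset.range N) ×ˢ P := by simp [hp]; omega
      rw [Finset.mem_insert, Finset.mem_union]
      right
      rcases hx with rfl | rfl
      · left; exact Finset.mem_image_of_mem (fun k : ℕ × ℝ => lam k.1 - k.2) hmem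
      · right; exact Finset.mem_image_of_mem (fun k : ℕ × ℝ => k.2 - lam k.1) hmem

include hlam in
lemma tail_interp (T μ : ℝ) (hT : 0 < T) : ∃ N : ℕ, (∀ m, N ≤ m → ∀ p ∈ P, lam m - p ≠ μ ∧ p - lam m ≠ μ) ∧
    ∀ (E : ℝ → ℂ) (KE : ℝ), (∀ s : Finset ℝ, ∑ y ∈ s, ‖E y‖ ^ 2 ≤ KE) →
    ∃ w, Supp T w ∧ Mom w μ = E μ ∧
      ∀ m, N ≤ m → ∀ p ∈ P, Mom w (lam m - p) = E (lam m - p) ∧ Mom w (p - lam m) = E (p - lam m) := by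
  classical
  obtain ⟨G, hG, hO, hint⟩ := interp (insert 0 (P ∪ P.image (fun p => -p))) T hT
  obtain ⟨N, hN1, hN⟩ := hlam (G + |μ|)
  have hμ0 := abs_nonneg μ
  have hμ1 := neg_abs_le μ
  have hμ2 := le_abs_self μ
  have hO1 : ∀ p ∈ P, p ∈ insert 0 (P ∪ P.image (fun p => -p)) := fun p hp => by simp [hp]
  have hO2 : ∀ p ∈ P, -p ∈ insert 0 (P ∪ P.image (fun p => -p)) := fun p hp => by simp [hp]
  refine ⟨N, ?_, ?_⟩
  · intro m hm p hp
    have h1 := hO p (hO1 p hp)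
    have h2 := (hN m hm).1
    have h3 := abs_nonneg p
    have h4 := neg_abs_le p
    have h5 := le_abs_self p
    constructor <;> intro h <;> linarith
  · intro E KE hE
    obtain ⟨w, hw, hwm⟩ := hint {x | x = μ ∨ ∃ m, N ≤ m ∧ (x = lam m ∨ x = - lam m)} (by
      have hpp : ∀ m n, N ≤ m → N ≤ n → lam m ≠ lam n → G ≤ |lam m - lam n| := by
        intro m n hm hn hne
        rcases lt_trichotomy m n with h | h | h
        · have := (hN m hm).2 n h
          rw [abs_sub_comm]
          exact le_trans (by linarith) (le_abs_self _)
        · rw [h] at hne; exact absurd rfl hne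
        · have := (hN n hn).2 m h
          exact le_trans (by linarith) (le_abs_self _)
      rintro x (rfl | ⟨m, hm, rfl | rfl⟩) y (rfl | ⟨n, hn, rfl | rfl⟩) hne
      · exact absurd rfl hne
      · have := (hN n hn).1
        rw [abs_sub_comm]; exact le_trans (by linarith) (le_abs_self _)
      · have := (hN n hn).1
        exact le_trans (by linarith) (le_abs_self _)
      · have := (hN m hm).1
        exact le_trans (by linarith) (le_abs_self _)
      · exact hpp m n hm hn hne
      · have := (hN m hm).1
        have := (hN n hn).1
        exact le_trans (by linarith) (le_abs_self _)
      · have := (hN m hm).1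
        rw [abs_sub_comm]; exact le_trans (by linarith) (le_abs_self _)
      · have := (hN m hm).1
        have := (hN n hn).1
        rw [abs_sub_comm]; exact le_trans (by linarith) (le_abs_self _)
      · have := hpp n m hn hm (fun h => hne (by rw [h]))
        rwa [show - lam m - - lam n = lam n - lam m by ring]) E KE hE
    refine ⟨w, hw, ?_, ?_⟩
    · have := hwm μ (Or.inl rfl) 0 (by simp)
      simpa using this
    · intro m hm p hp
      refine ⟨?_, ?_⟩
      · have := hwm (lam m) (Or.inr ⟨m, hm, Or.inl rfl⟩) (-p) (hO2 p hp)
        rwa [← sub_eq_add_neg] at this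
      · have := hwm (-lam m) (Or.inr ⟨m, hm, Or.inr rfl⟩) p (hO1 p hp)
        rwa [neg_add_eq_sub] at this

include hlam in
lemma dual_fn (T μ : ℝ) (hT : 0 < T) : ∃ v, Supp T v ∧ Mom v μ = 1 ∧ (∀ x ∈ XX lam P, x ≠ μ → Mom v x = 0) ∧
    (μ ≠ 0 → tm v = 0) := by
  classical
  obtain ⟨N, hN, hint⟩ := tail_interp lam P hlam (T / 3) μ (by positivity)
  obtain ⟨w, hw, hwμ, hwt⟩ := hint (fun y => if y = μ then 1 else 0) 1 (by
    intro s
    have : ∀ y : ℝ, ‖(if y = μ then (1:ℂ) else 0)‖ ^ 2 = if y = μ then (1:ℝ) else 0 := by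
      intro y; split_ifs <;> simp
    simp_rw [this]
    rw [Finset.sum_ite_eq']
    split_ifs <;> norm_num)
  obtain ⟨F, hF0, hF⟩ := finX lam P N
  obtain ⟨v, hv, hvμ, hvF, hvz⟩ := kill (F.erase μ) μ (by simp) (show T / 3 < 2 * T / 3 by linarith) hw (by rw [hwμ]; simp)
  have hvX : ∀ x ∈ XX lam P, x ≠ μ → Mom v x = 0 := by
    intro x hx hxμ
    rcases hF x hx with h | ⟨n, hn, p, hp, h⟩
    · exact hvF x (Finset.mem_erase.2 ⟨hxμ, h⟩)
    · apply hvz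
      have h1 := hwt n hn p hp
      rcases h with rfl | rfl
      · rw [h1.1, if_neg (hN n hn p hp).1]
      · rw [h1.2, if_neg (hN n hn p hp).2]
  have hfin : ∃ u, Supp T u ∧ Mom u μ ≠ 0 ∧ (∀ x ∈ XX lam P, x ≠ μ → Mom u x = 0) ∧ (μ ≠ 0 → tm u = 0) := by
    by_cases hμ : μ = 0
    · exact ⟨v, hv.mono (by linarith), hvμ, hvX, fun h => absurd hμ h⟩
    · obtain ⟨s, hs, h1, h2, h3, h4⟩ := step (show 2 * T / 3 < T by linarith) hv μ 0 hμ hvμ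
      refine ⟨_, h1, h2, fun x hx hne => h4 x (hvX x hx hne), fun _ => ?_⟩
      rw [tm_Sh hv s hs.le, hvX 0 (Or.inl rfl) (Ne.symm hμ), mul_zero]
  obtain ⟨u, hu, h1, h2, h3⟩ := hfin
  refine ⟨fun t => (Mom u μ)⁻¹ * u t, hu.smul _, ?_, ?_, ?_⟩
  · rw [Mom_smul, inv_mul_cancel₀ h1]
  · intro x hx hne
    rw [Mom_smul, h2 x hx hne, mul_zero]
  · intro h
    rw [tm_smul, h3 h, mul_zero]

include hlam in
lemma dual_t (T : ℝ) (hT : 0 < T) : ∃ v, Supp T v ∧ tm v = 1 ∧ (∀ x ∈ XX lam P, Mom v x = 0) := by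
  obtain ⟨v, hv, h0, hX, _⟩ := dual_fn lam P hlam (T / 2) 0 (by positivity)
  have hc : ((T / 2 : ℝ) : ℂ) ≠ 0 := by exact_mod_cast (by positivity : T / 2 ≠ 0)
  have hs : Supp T (Sh 0 (T / 2) v) := by
    have := hv.Sh 0 (T / 2) (by positivity)
    rwa [add_halves] at this
  refine ⟨fun t => ((T / 2 : ℝ) : ℂ)⁻¹ * Sh 0 (T / 2) v t, hs.smul _, ?_, ?_⟩
  · rw [tm_smul, tm_Sh hv _ (by positivity), h0, mul_one, inv_mul_cancel₀ hc]
  · intro x hx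
    rw [Mom_smul, Mom_Sh hv _ _ (by positivity)]
    by_cases h : x = 0
    · rw [h]; simp
    · rw [hX x hx h]; simp

include hlam in
lemma main_complex (T : ℝ) (hT : 0 < T) (E : ℝ → ℂ) (KE : ℝ) (hE : ∀ s : Finset ℝ, ∑ y ∈ s, ‖E y‖ ^ 2 ≤ KE) (D : ℂ) :
    ∃ w, Supp T w ∧ (∀ x ∈ XX lam P, Mom w x = E x) ∧ tm w = D := by
  classical
  obtain ⟨N, hN, hint⟩ := tail_interp lam P hlam T 0 hT
  obtain ⟨w, hw, hw0, hwt⟩ := hint E KE hE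
  obtain ⟨F, hF0, hF⟩ := finX lam P N
  choose v hv hv1 hvX _ using fun μ => dual_fn lam P hlam T μ hT
  obtain ⟨r, hr, hrt, hrX⟩ := dual_t lam P hlam T hT
  have hsum : Supp T (fun t => ∑ μ ∈ F, (E μ - Mom w μ) * v μ t) := Supp.sum F (v := fun μ t => (E μ - Mom w μ) * v μ t) fun μ => (hv μ).smul _
  set w1 : ℝ → ℂ := fun t => w t + ∑ μ ∈ F, (E μ - Mom w μ) * v μ t with hw1
  have hw1s : Supp T w1 := hw.add hsum
  have hw1m : ∀ x ∈ XX lam P, Mom w1 x = E x := by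
    intro x hx
    rw [hw1, Mom_add hw hsum, Mom_sum F (v := fun μ t => (E μ - Mom w μ) * v μ t) (fun μ => (hv μ).smul _)]
    simp_rw [Mom_smul]
    by_cases hxF : x ∈ F
    · rw [Finset.sum_eq_single x]
      · rw [hv1]; ring
      · intro μ _ hne
        rw [hvX μ x hx hne.symm, mul_zero]
      · intro h; exact absurd hxF h
    · rw [Finset.sum_eq_zero, add_zero]
      · rcases hF x hx with h | ⟨n, hn, p, hp, h⟩
        · exact absurd h hxF
        · rcases h with rfl | rfl
          · exact (hwt n hn p hp).1
          · exact (hwt n hn p hp).2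
      · intro μ hμ
        rw [hvX μ x hx (fun h => hxF (h ▸ hμ)), mul_zero]
  refine ⟨fun t => w1 t + (D - tm w1) * r t, hw1s.add (hr.smul _), ?_, ?_⟩
  · intro x hx
    rw [Mom_add hw1s (hr.smul _), Mom_smul, hrX x hx, mul_zero, add_zero, hw1m x hx]
  · rw [tm_add hw1s (hr.smul _), tm_smul, hrt]; ring

end main

theorem abstract_section {ι H V : Type*} [NormedAddCommGroup H] [InnerProductSpace ℝ H]
    [CompleteSpace H] [NormedAddCommGroup V] [NormedSpace ℝ V] [CompleteSpace V]
    (L : ι → H →L[ℝ] ℂ) (c : ι → V →L[ℝ] ℂ) (h : ∀ v, ∃ x, ∀ i, L i x = c i v) :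
    ∃ M : V →L[ℝ] H, ∀ v i, L i (M v) = c i v := by
  classical
  let N : Submodule ℝ H := ⨅ i, (L i).ker
  have hNmem : ∀ x, x ∈ N ↔ ∀ i, L i x = 0 := by
    intro x; simp [N, Submodule.mem_iInf]
  have hNc : IsClosed (N : Set H) := by
    have : (N : Set H) = ⋂ i, {x | L i x = 0} := by
      ext x; simp only [SetLike.mem_coe, hNmem, Set.mem_iInter]; rfl
    rw [this]
    exact isClosed_iInter fun i => isClosed_eq (L i).continuous continuous_const
  haveI : CompleteSpace N := hNc.completeSpace_coe
  have hu : ∀ v, ∃ x, x ∈ Nᗮ ∧ ∀ i, L i x = c i v := by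
    intro v
    obtain ⟨x, hx⟩ := h v
    refine ⟨x - N.starProjection x, N.sub_starProjection_mem_orthogonal x, fun i => ?_⟩
    have := (hNmem _).1 (N.starProjection_apply_mem x) i
    rw [map_sub, this, hx, sub_zero]
  have huniq : ∀ x y, x ∈ Nᗮ → y ∈ Nᗮ → (∀ i, L i x = L i y) → x = y := by
    intro x y hx hy hxy
    have h1 : x - y ∈ Nᗮ := Nᗮ.sub_mem hx hy
    have h2 : x - y ∈ N := by
      rw [hNmem]; intro i; rw [map_sub, hxy, sub_self]
    have := Submodule.inner_right_of_mem_orthogonal h2 h1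
    exact sub_eq_zero.1 (inner_self_eq_zero.1 this)
  choose s hs hsL using hu
  let M0 : V →ₗ[ℝ] H :=
    { toFun := s
      map_add' := fun a b => huniq _ _ (hs _) (Nᗮ.add_mem (hs a) (hs b)) fun i => by
        simp [hsL]
      map_smul' := fun r a => huniq _ _ (hs _) (Nᗮ.smul_mem r (hs a)) fun i => by
        simp [hsL] }
  have hM0 : ∀ v, M0 v = s v := fun v => rfl
  refine ⟨⟨M0, ?_⟩, fun v i => hsL v i⟩
  refine LinearMap.continuous_of_seq_closed_graph (g := M0) ?_
  intro u x y hux huy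
  refine huniq _ _ ?_ (hs x) fun i => ?_
  · refine (Submodule.isClosed_orthogonal N).mem_of_tendsto huy (Filter.Eventually.of_forall ?_)
    intro n; exact hs _
  · have h1 := ((L i).continuous.tendsto y).comp huy
    have h2 := ((c i).continuous.tendsto x).comp hux
    rw [hM0, hsL]
    refine tendsto_nhds_unique h1 (h2.congr fun n => ?_)
    exact (hsL _ i).symm

theorem moment_clm (T : ℝ) (hT : 0 < T) (g : ℝ → ℂ) (hg : Continuous g) :
    ∃ L : Lp ℝ 2 (volume.restrict (Set.Ioo (0 : ℝ) T)) →L[ℝ] ℂ,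
      ∀ f, L f = ∫ t in (0:ℝ)..T, ((f t : ℝ) : ℂ) * g t := by
  set μ := volume.restrict (Set.Ioo (0 : ℝ) T) with hμ
  have key : ∀ r : ℝ → ℝ, Continuous r → MemLp r 2 μ := by
    intro r hr
    have : MemLp r 2 (volume.restrict (Set.Icc (0:ℝ) T)) := by
      obtain ⟨C, hC⟩ := (isCompact_Icc (a := (0:ℝ)) (b := T)).exists_bound_of_continuousOn hr.continuousOn
      refine MemLp.of_bound hr.aestronglyMeasurable C ?_
      exact (ae_restrict_iff' measurableSet_Icc).2 (Filter.Eventually.of_forall fun t ht => hC t ht)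
    exact this.mono_measure (Measure.restrict_mono Set.Ioo_subset_Icc_self le_rfl)
  have hre := key (fun t => (g t).re) (Complex.continuous_re.comp hg)
  have him := key (fun t => (g t).im) (Complex.continuous_im.comp hg)
  have hin : ∀ (r : ℝ → ℝ) (hr : MemLp r 2 μ) (f : Lp ℝ 2 μ),
      inner ℝ (hr.toLp r) f = ∫ t, f t * r t ∂μ := by
    intro r hr f
    rw [L2.inner_def]
    refine integral_congr_ae ?_
    filter_upwards [hr.coeFn_toLp] with t ht
    rw [ht]; simp
  refine ⟨Complex.ofRealCLM.comp (innerSL ℝ (hre.toLp _)) +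
    Complex.I • Complex.ofRealCLM.comp (innerSL ℝ (him.toLp _)), fun f => ?_⟩
  have hf : MemLp f 2 μ := Lp.memLp f
  have i1 : Integrable (fun t => f t * (g t).re) μ := hf.integrable_mul hre
  have i2 : Integrable (fun t => f t * (g t).im) μ := hf.integrable_mul him
  simp only [ContinuousLinearMap.add_apply, ContinuousLinearMap.smul_apply,
    ContinuousLinearMap.comp_apply, innerSL_apply_apply, hin, Complex.ofRealCLM_apply, smul_eq_mul]
  rw [intervalIntegral.integral_of_le hT.le, ← Measure.restrict_congr_set Ioo_ae_eq_Ioc, ← hμ,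
    ← integral_complex_ofReal, ← integral_complex_ofReal, ← integral_const_mul, ← integral_add i1.ofReal
      (i2.ofReal.const_mul _)]
  refine integral_congr_ae (Filter.Eventually.of_forall fun t => ?_)
  apply Complex.ext <;> simp

theorem real_part (T : ℝ) (hT : 0 < T) (w : ℝ → ℂ) (hw : Supp T w) :
    ∃ f : Lp ℝ 2 (volume.restrict (Set.Ioo (0 : ℝ) T)),
      (∀ θ : ℝ, ∫ t in (0:ℝ)..T, ((f t : ℝ) : ℂ) * Complex.exp (I * (θ:ℂ) * (t:ℂ)) =
        (Mom w θ + (starRingEnd ℂ) (Mom w ((-θ : ℝ)))) / 2) ∧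
      ∫ t in (0:ℝ)..T, ((f t : ℝ) : ℂ) * (t : ℂ) = ((tm w).re : ℂ) := by
  set μ := volume.restrict (Set.Ioo (0 : ℝ) T) with hμ
  have hm : MemLp (fun t => (w t).re) 2 μ := hw.1.re.restrict _
  have conv : ∀ φ : ℝ → ℂ, ∫ t in (0:ℝ)..T, ((hm.toLp _ t : ℝ) : ℂ) * φ t =
      ∫ t : ℝ, ((w t).re : ℂ) * φ t := by
    intro φ
    have e1 : ∫ t : ℝ, ((w t).re : ℂ) * φ t = ∫ t in Set.Ioc 0 T, ((w t).re : ℂ) * φ t := by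
      symm
      refine setIntegral_eq_integral_of_forall_compl_eq_zero fun t ht => ?_
      rw [hw.2 t ht]; simp
    rw [e1, intervalIntegral.integral_of_le hT.le, ← Measure.restrict_congr_set Ioo_ae_eq_Ioc, ← hμ]
    refine integral_congr_ae ?_
    filter_upwards [hm.coeFn_toLp] with t ht
    rw [ht]
  refine ⟨hm.toLp _, fun θ => ?_, ?_⟩
  · rw [conv]
    have h1 := hw.int (fun t : ℝ => Complex.exp (I * θ * t)) (cexp_cont θ)
    have h2 := hw.int (fun t : ℝ => Complex.exp (I * ((-θ : ℝ):ℂ) * t)) (cexp_cont _)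
    unfold Mom
    rw [← integral_conj, ← integral_add h1, ← integral_div]
    · refine integral_congr_ae (Filter.Eventually.of_forall fun t => ?_)
      simp only [map_mul, ← Complex.exp_conj, Complex.conj_I, Complex.conj_ofReal]
      rw [Complex.re_eq_add_conj]
      have : -I * ((-θ : ℝ):ℂ) * (t:ℂ) = I * θ * t := by push_cast; ring
      rw [this]; ring
    · exact (Complex.conjLIE.toContinuousLinearEquiv.toContinuousLinearMap).integrable_comp h2
  · rw [conv (fun t => (t:ℂ))]
    have h1 := hw.int (fun t : ℝ => (t:ℂ)) Complex.continuous_ofReal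
    unfold tm
    have : ((∫ t : ℝ, w t * (t:ℂ)).re) = ∫ t : ℝ, (w t * (t:ℂ)).re :=
      (integral_re h1).symm
    rw [this, ← integral_complex_ofReal]
    refine integral_congr_ae (Filter.Eventually.of_forall fun t => ?_)
    simp

theorem ext_data (ω : ℕ → ℝ) (h0 : ω 0 = 0) (hpos : ∀ k, 1 ≤ k → 0 < ω k)
    (hinj : Function.Injective ω) (d : ℕ → ℂ) (hd : Summable fun n => ‖d n‖ ^ 2)
    (hd0 : (d 0).im = 0) :
    ∃ (E : ℝ → ℂ) (KE : ℝ), (∀ s : Finset ℝ, ∑ y ∈ s, ‖E y‖ ^ 2 ≤ KE) ∧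
      ∀ n, E (ω n) = d n ∧ E (-ω n) = (starRingEnd ℂ) (d n) := by
  classical
  let F : ℝ → ℂ := Function.extend ω d 0
  have hF : ∀ n, F (ω n) = d n := fun n => hinj.extend_apply _ _ _
  let E : ℝ → ℂ := fun x => if 0 ≤ x then F x else (starRingEnd ℂ) (F (-x))
  have hnn : ∀ n, 0 ≤ ω n := by
    intro n
    rcases Nat.eq_zero_or_pos n with rfl | h
    · exact h0.ge
    · exact (hpos n h).le
  have hFs : Summable fun x => ‖F x‖ ^ 2 := by
    have : (fun x => ‖F x‖ ^ 2) = Function.extend ω (fun n => ‖d n‖ ^ 2) 0 := by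
      funext x
      by_cases hx : ∃ n, ω n = x
      · obtain ⟨n, rfl⟩ := hx
        rw [hF, hinj.extend_apply]
      · simp only [F]
        rw [Function.extend_apply' _ _ _ hx, Function.extend_apply' _ _ _ hx]; simp
    rw [this]
    exact (Function.Injective.summable_iff hinj (f := Function.extend ω (fun n => ‖d n‖ ^ 2) 0)
      (fun x hx => by
        rw [Function.extend_apply' _ _ _ (by simpa using hx)]; rfl)).1
      (by simpa [Function.comp_def, hinj.extend_apply] using hd)
  have hFs' : Summable fun x => ‖F (-x)‖ ^ 2 :=
    (Equiv.neg ℝ).summable_iff (f := fun x => ‖F x‖ ^ 2) |>.2 hFs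
  have hE : Summable fun x => ‖E x‖ ^ 2 := by
    refine Summable.of_nonneg_of_le (fun _ => by positivity) (fun x => ?_) (hFs.add hFs')
    simp only [E]
    split_ifs
    · have : 0 ≤ ‖F (-x)‖ ^ 2 := by positivity
      linarith
    · have : 0 ≤ ‖F x‖ ^ 2 := by positivity
      rw [RCLike.norm_conj]; linarith
  refine ⟨E, ∑' x, ‖E x‖ ^ 2, fun s => hE.sum_le_tsum s fun _ _ => by positivity, fun n => ⟨?_, ?_⟩⟩
  · simp only [E]; rw [if_pos (hnn n), hF]
  · rcases Nat.eq_zero_or_pos n with rfl | h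
    · simp only [E]; rw [if_pos (by rw [h0]; simp)]
      have : -ω 0 = ω 0 := by rw [h0]; simp
      rw [this, hF]
      exact (Complex.conj_eq_iff_im.2 hd0).symm
    · simp only [E]; rw [if_neg (by have := hpos n h; linarith), neg_neg, hF]

instance l2r_complete : CompleteSpace l2r := by
  have hc : IsClosed (l2r : Set (lp (fun _ : ℕ => ℂ) 2)) := by
    have hcont : Continuous fun d : lp (fun _ : ℕ => ℂ) 2 => (d 0).im :=
      Complex.continuous_im.comp ((continuous_apply 0).comp (lp.uniformContinuous_coe.continuous))
    exact isClosed_eq hcont continuous_const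
  exact hc.completeSpace_coe

/-- With `(j_{0,k})_{k≥1}` the increasing enumeration of the positive
zeros of `J_0`, `(ω_k)_{k≥1}` the increasing enumeration of
`{j_{0,n}² - j_{0,p}² : p ∈ {1,2,3}, n ≥ p+1}` and `ω_0 := 0`, for every `T > 0` there
is a continuous `ℝ`-linear map `M : ℝ × ℓ²_r(ℕ,ℂ) → L²((0,T);ℝ)` such that
`w := M(d̃, d)` satisfies `∫_0^T w(t) e^{iω_n t} dt = d_n` for all `n` and
`∫_0^T t w(t) dt = d̃`. -/
theorem stmt12 (j : ℕ → ℝ)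
    (hj_pos : ∀ k, 1 ≤ k → 0 < j k)
    (hj_mono : ∀ k l, 1 ≤ k → k < l → j k < j l)
    (hj_zero : ∀ k, 1 ≤ k → besselJ 0 (j k) = 0)
    (hj_surj : ∀ x : ℝ, 0 < x → besselJ 0 x = 0 → ∃ k, 1 ≤ k ∧ j k = x)
    (ω : ℕ → ℝ) (hω_zero : ω 0 = 0)
    (hω_mono : ∀ k, 1 ≤ k → ω k < ω (k + 1))
    (hω_mem : ∀ k, 1 ≤ k → ω k ∈
      {x : ℝ | ∃ p ∈ ({1, 2, 3} : Set ℕ), ∃ n, p + 1 ≤ n ∧ x = (j n) ^ 2 - (j p) ^ 2})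
    (hω_surj : ∀ x ∈
      {x : ℝ | ∃ p ∈ ({1, 2, 3} : Set ℕ), ∃ n, p + 1 ≤ n ∧ x = (j n) ^ 2 - (j p) ^ 2},
      ∃ k, 1 ≤ k ∧ ω k = x)
    (T : ℝ) (hT : 0 < T) :
    ∃ M : (ℝ × l2r) →L[ℝ] (Lp ℝ 2 (volume.restrict (Set.Ioo (0 : ℝ) T))),
      ∀ (dtilde : ℝ) (d : l2r),
        (∀ n : ℕ,
          ∫ t in (0 : ℝ)..T,
            ((M (dtilde, d) t : ℝ) : ℂ) * Complex.exp (Complex.I * (ω n : ℂ) * (t : ℂ))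
            = (d : lp (fun _ : ℕ => ℂ) 2) n) ∧
        (∫ t in (0 : ℝ)..T, t * (M (dtilde, d) t)) = dtilde := by
  classical
  have hωpos : ∀ k, 1 ≤ k → 0 < ω k := by
    intro k hk
    obtain ⟨p, hp, n, hn, hx⟩ := hω_mem k hk
    have hp1 : 1 ≤ p := by
      rcases hp with h | h | h <;> simp_all
    have h1 := hj_pos p hp1
    have h2 := hj_mono p n hp1 (by omega)
    rw [hx]; nlinarith
  have hωs : StrictMono ω := by
    refine strictMono_nat_of_lt_succ fun n => ?_
    rcases Nat.eq_zero_or_pos n with rfl | h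
    · rw [hω_zero]; exact hωpos _ le_rfl
    · exact hω_mono n h
  let P : Finset ℝ := {j 1 ^ 2, j 2 ^ 2, j 3 ^ 2}
  have hX : ∀ n, ω n ∈ XX (fun n => j n ^ 2) P ∧ -ω n ∈ XX (fun n => j n ^ 2) P := by
    intro n
    rcases Nat.eq_zero_or_pos n with rfl | h
    · exact ⟨Or.inl hω_zero, Or.inl (by rw [hω_zero]; simp)⟩
    · obtain ⟨p, hp, m, hm, hx⟩ := hω_mem n h
      have hpP : j p ^ 2 ∈ P := by
        rcases hp with h | h | h <;> simp_all [P]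
      exact ⟨Or.inr ⟨m, _, hpP, Or.inl hx⟩, Or.inr ⟨m, _, hpP, Or.inr (by rw [hx]; ring)⟩⟩
  have hsolve : ∀ v : ℝ × l2r, ∃ f : Lp ℝ 2 (volume.restrict (Set.Ioo (0 : ℝ) T)),
      (∀ n, ∫ t in (0:ℝ)..T, ((f t : ℝ) : ℂ) * Complex.exp (I * (ω n:ℂ) * (t:ℂ)) =
        (v.2 : lp (fun _ : ℕ => ℂ) 2) n) ∧
      ∫ t in (0:ℝ)..T, ((f t : ℝ) : ℂ) * (t : ℂ) = (v.1 : ℂ) := by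
    rintro ⟨D, d⟩
    have hds : Summable fun n => ‖(d : lp (fun _ : ℕ => ℂ) 2) n‖ ^ 2 := by
      have := (lp.memℓp (d : lp (fun _ : ℕ => ℂ) 2)).summable (by norm_num)
      simpa using this
    obtain ⟨E, KE, hKE, hE⟩ := ext_data ω hω_zero hωpos hωs.injective
      (fun n => (d : lp (fun _ : ℕ => ℂ) 2) n) hds d.2
    obtain ⟨w, hw, hwm, hwt⟩ := main_complex (fun n => j n ^ 2) P
      (lam_gap_tendsto j hj_pos hj_mono hj_zero hj_surj) T hT E KE hKE (D : ℂ)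
    obtain ⟨f, hf1, hf2⟩ := real_part T hT w hw
    refine ⟨f, fun n => ?_, ?_⟩
    · rw [hf1, hwm _ (hX n).1, hwm _ (hX n).2, (hE n).1, (hE n).2, Complex.conj_conj]
      ring
    · rw [hf2, hwt]; simp
  let g : Option ℕ → ℝ → ℂ := fun o => match o with
    | none => fun t => (t : ℂ)
    | some n => fun t => Complex.exp (I * (ω n : ℂ) * (t : ℂ))
  have hg : ∀ o, Continuous (g o) := by
    intro o
    cases o with
    | none => exact Complex.continuous_ofReal
    | some n => exact cexp_cont (ω n)
  choose L hL using fun o => moment_clm T hT (g o) (hg o)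
  have hev : ∀ n : ℕ, ∃ c : (ℝ × l2r) →L[ℝ] ℂ, ∀ v, c v = (v.2 : lp (fun _ : ℕ => ℂ) 2) n := by
    intro n
    refine ⟨⟨{ toFun := fun v => (v.2 : lp (fun _ : ℕ => ℂ) 2) n
               map_add' := fun a b => by simp
               map_smul' := fun r a => by simp }, ?_⟩, fun v => rfl⟩
    exact (continuous_apply n).comp ((lp.uniformContinuous_coe.continuous).comp
      (continuous_subtype_val.comp continuous_snd))
  choose cn hcn using hev
  let c : Option ℕ → (ℝ × l2r) →L[ℝ] ℂ := fun o => match o with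
    | none => Complex.ofRealCLM.comp (ContinuousLinearMap.fst ℝ ℝ l2r)
    | some n => cn n
  obtain ⟨M, hM⟩ := abstract_section L c (by
    intro v
    obtain ⟨f, h1, h2⟩ := hsolve v
    refine ⟨f, fun o => ?_⟩
    rw [hL]
    cases o with
    | none => exact h2
    | some n => exact (h1 n).trans (hcn n v).symm)
  refine ⟨M, fun D d => ⟨fun n => ?_, ?_⟩⟩
  · have := hM (D, d) (some n)
    rw [hL] at this
    exact this.trans (hcn n _)
  · have := hM (D, d) none
    rw [hL] at this
    have h3 : ∫ t in (0:ℝ)..T, (((t * M (D, d) t : ℝ)) : ℂ) = (D : ℂ) := by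
      refine Eq.trans ?_ this
      refine intervalIntegral.integral_congr fun t _ => ?_
      simp only [g]; push_cast; ring
    rw [intervalIntegral.integral_ofReal] at h3
    exact_mod_cast h3
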